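/- arXiv:2306.14522 — 8 statements merged into one kernel-verified Lean document; each statement's English description precedes it below -/
import Mathlib

section
/- Let S ⊆ ℝ^d be a nonempty open convex set, let φ, f : ℝ^d → ℝ be differentiable on S with φ convex on S, and let L > 0. Then the functions Lφ + f and Lφ − f are both convex on S if and only if for all x, y ∈ S one has |f(x) − f(y) − ⟨∇f(y), x − y⟩| ≤ L·D_φ(x, y). -/
open scoped RealInnerProductSpace

/-!
For a differentiable function, convexity on a convex set means that its Bregman distance is
nonnegative there. Since `D_g` is linear in `g`, convexity of `L φ ± f` says
`0 ≤ L D_φ ± D_f`, that is, `|D_f| ≤ L D_φ`.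
-/

section BregmanDistance

variable {E : Type*} [AddCommGroup E] [Module ℝ E]
  {S : Set E} {φ f g : E → ℝ} {φ' f' g' : E → Module.Dual ℝ E}

/-- `g' y` is a Gateaux derivative of `g` relative to `S` at every `y ∈ S`. It is encoded by
one-dimensional derivatives along lines, so that `E` needs no topology. -/
def HasGateauxDerivOn (g : E → ℝ) (g' : E → Module.Dual ℝ E) (S : Set E) : Prop :=
  ∀ y ∈ S, ∀ v, HasLineDerivWithinAt ℝ g (g' y v) S y v

/-- The Bregman distance `D_g(x, y)`. The derivative of `g` is an explicit argument `g'`, with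
`g' y` a linear form in place of `⟨∇g(y), ·⟩`. -/
def bregmanDist (g : E → ℝ) (g' : E → Module.Dual ℝ E) (x y : E) : ℝ :=
  g x - g y - g' y (x - y)

/-- `f` is `L`-smooth adaptable with respect to `φ` on `S`. -/
def IsSmoothAdaptableOn (L : ℝ) (φ f : E → ℝ) (S : Set E) : Prop :=
  ConvexOn ℝ S (L • φ + f) ∧ ConvexOn ℝ S (L • φ - f)

theorem HasGateauxDerivOn.add (hf : HasGateauxDerivOn f f' S) (hg : HasGateauxDerivOn g g' S) :
    HasGateauxDerivOn (f + g) (f' + g') S :=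
  fun y hy v => HasDerivWithinAt.add (hf y hy v) (hg y hy v)

theorem HasGateauxDerivOn.sub (hf : HasGateauxDerivOn f f' S) (hg : HasGateauxDerivOn g g' S) :
    HasGateauxDerivOn (f - g) (f' - g') S :=
  fun y hy v => HasDerivWithinAt.sub (hf y hy v) (hg y hy v)

theorem HasGateauxDerivOn.const_smul (c : ℝ) (hg : HasGateauxDerivOn g g' S) :
    HasGateauxDerivOn (c • g) (c • g') S :=
  fun y hy v => HasDerivWithinAt.const_smul c (hg y hy v)

theorem bregmanDist_add (f g : E → ℝ) (f' g' : E → Module.Dual ℝ E) (x y : E) :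
    bregmanDist (f + g) (f' + g') x y = bregmanDist f f' x y + bregmanDist g g' x y := by
  simp only [bregmanDist, Pi.add_apply, LinearMap.add_apply]
  ring

theorem bregmanDist_sub (f g : E → ℝ) (f' g' : E → Module.Dual ℝ E) (x y : E) :
    bregmanDist (f - g) (f' - g') x y = bregmanDist f f' x y - bregmanDist g g' x y := by
  simp only [bregmanDist, Pi.sub_apply, LinearMap.sub_apply]
  ring

theorem bregmanDist_smul (c : ℝ) (g : E → ℝ) (g' : E → Module.Dual ℝ E) (x y : E) :
    bregmanDist (c • g) (c • g') x y = c * bregmanDist g g' x y := by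
  simp only [bregmanDist, Pi.smul_apply, LinearMap.smul_apply, smul_eq_mul]
  ring

theorem le_sub_of_convexOn_of_hasLineDerivWithinAt {m : ℝ} {x y : E} (hg : ConvexOn ℝ S g)
    (hx : x ∈ S) (hy : y ∈ S) (hm : HasLineDerivWithinAt ℝ g m S y (x - y)) :
    m ≤ g x - g y := by
  have hline : ⇑(AffineMap.lineMap (k := ℝ) y x) = fun t => y + t • (x - y) := by
    ext t
    rw [AffineMap.lineMap_apply_module', add_comm]
  have hderiv : HasDerivWithinAt (g ∘ AffineMap.lineMap y x) m
      (AffineMap.lineMap y x ⁻¹' S) (0 : ℝ) := by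
    rw [hline]
    exact hm
  have hslope : m ≤ slope (g ∘ AffineMap.lineMap y x) (0 : ℝ) 1 :=
    (hg.comp_affineMap (AffineMap.lineMap y x)).le_slope_of_hasDerivWithinAt
      (by simpa using hy) (by simpa using hx) zero_lt_one hderiv
  simpa [slope_def_field] using hslope

theorem convexOn_of_forall_bregmanDist_nonneg (hS : Convex ℝ S)
    (h : ∀ x ∈ S, ∀ y ∈ S, 0 ≤ bregmanDist g g' x y) : ConvexOn ℝ S g := by
  refine ⟨hS, fun x hx y hy a b ha hb hab => ?_⟩
  set z := a • x + b • y with hz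
  have hzS : z ∈ S := hS hx hy ha hb hab
  have hcenter : a • (x - z) + b • (y - z) = 0 := by
    rw [smul_sub, smul_sub, sub_add_sub_comm, ← add_smul, hab, one_smul, ← hz, sub_self]
  have hlinear : a * g' z (x - z) + b * g' z (y - z) = 0 := by
    simpa using congrArg (g' z) hcenter
  refine sub_nonneg.mp ?_
  calc
    0 ≤ a * bregmanDist g g' x z + b * bregmanDist g g' y z :=
      add_nonneg (mul_nonneg ha (h x hx z hzS)) (mul_nonneg hb (h y hy z hzS))
    _ = a • g x + b • g y - g z := by
      simp only [bregmanDist, smul_eq_mul]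
      linear_combination -hlinear - g z * hab

theorem convexOn_iff_forall_bregmanDist_nonneg (hS : Convex ℝ S)
    (hg : HasGateauxDerivOn g g' S) :
    ConvexOn ℝ S g ↔ ∀ x ∈ S, ∀ y ∈ S, 0 ≤ bregmanDist g g' x y :=
  ⟨fun h x hx y hy =>
      sub_nonneg.mpr (le_sub_of_convexOn_of_hasLineDerivWithinAt h hx hy (hg y hy (x - y))),
    convexOn_of_forall_bregmanDist_nonneg hS⟩

theorem smooth_adaptable_iff_two_sided_descent_general (hS : Convex ℝ S)
    (hφ : HasGateauxDerivOn φ φ' S) (hf : HasGateauxDerivOn f f' S) (L : ℝ) :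
    IsSmoothAdaptableOn L φ f S ↔
      ∀ x ∈ S, ∀ y ∈ S, |bregmanDist f f' x y| ≤ L * bregmanDist φ φ' x y := by
  rw [IsSmoothAdaptableOn,
    convexOn_iff_forall_bregmanDist_nonneg hS ((hφ.const_smul L).add hf),
    convexOn_iff_forall_bregmanDist_nonneg hS ((hφ.const_smul L).sub hf)]
  simp only [bregmanDist_add, bregmanDist_sub, bregmanDist_smul, abs_le, neg_le_iff_add_nonneg',
    sub_nonneg, ← forall_and]

end BregmanDistance

theorem hasGateauxDerivOn_of_hasGradientAt {E : Type*} [NormedAddCommGroup E]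
    [InnerProductSpace ℝ E] [CompleteSpace E] {S : Set E} {g : E → ℝ} {g' : E → E}
    (hg : ∀ y ∈ S, HasGradientAt g (g' y) y) :
    HasGateauxDerivOn g (fun y => innerₗ E (g' y)) S :=
  fun y hy v => ((hg y hy).hasFDerivAt.hasLineDerivAt v).hasLineDerivWithinAt S

/-- smooth adaptability (convexity of `L·φ + f` and `L·φ − f` on `S`)
is equivalent to the two-sided descent inequality with the Bregman distance `D_φ`. -/
theorem smooth_adaptable_iff_two_sided_descent {d : ℕ}
    (S : Set (EuclideanSpace ℝ (Fin d))) (hSne : S.Nonempty) (hSopen : IsOpen S)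
    (hSconv : Convex ℝ S)
    (φ f : EuclideanSpace ℝ (Fin d) → ℝ)
    (φ' f' : EuclideanSpace ℝ (Fin d) → EuclideanSpace ℝ (Fin d))
    (hφdiff : ∀ x ∈ S, HasGradientAt φ (φ' x) x)
    (hfdiff : ∀ x ∈ S, HasGradientAt f (f' x) x)
    (hφconv : ConvexOn ℝ S φ)
    (L : ℝ) (hL : 0 < L) :
    (ConvexOn ℝ S (fun x => L * φ x + f x) ∧ ConvexOn ℝ S (fun x => L * φ x - f x)) ↔
      (∀ x ∈ S, ∀ y ∈ S,
        abs (f x - f y - ⟪f' y, x - y⟫) ≤ L * (φ x - φ y - ⟪φ' y, x - y⟫)) :=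
  smooth_adaptable_iff_two_sided_descent_general hSconv
    (hasGateauxDerivOn_of_hasGradientAt hφdiff) (hasGateauxDerivOn_of_hasGradientAt hfdiff) L
end

section
/- Let φ : ℝ^d → ℝ be differentiable and μ-strongly convex with μ > 0, and let R : ℝ^d → ℝ ∪ {+∞} be proper and convex. For i = 1, 2, let x_i, x_i⁺ ∈ ℝ^d satisfy x_i − ∇φ(x_i⁺) ∈ ∂R(x_i⁺). Then ‖x₁⁺ − x₂⁺‖ ≤ (1/μ)‖x₁ − x₂‖. -/
open scoped RealInnerProductSpace

/-!
Dividing the strong convexity inequality on the segment from `x` to `y` by the segment parameter and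
letting it tend to `0` gives `φ x + φ' x (y - x) + μ / 2 * ‖x - y‖ ^ 2 ≤ φ y`; adding the same
inequality with `x` and `y` exchanged shows that `φ'` is `μ`-strongly monotone. Since `∂R` is
monotone, `ξᵢ ∈ φ' pᵢ + ∂R pᵢ` implies `μ * ‖p₁ - p₂‖ ^ 2 ≤ (ξ₁ - ξ₂) (p₁ - p₂)`, whose right-hand
side is at most `‖ξ₁ - ξ₂‖ * ‖p₁ - p₂‖`. This takes place in the dual of a normed space; in a
Hilbert space, the Riesz isometry turns derivatives into gradients.
-/

open Filter Set Topology

section UniformConvexity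

variable {E : Type*} [NormedAddCommGroup E] [NormedSpace ℝ E] {s : Set E} {f : E → ℝ} {x y : E}

theorem add_lineDeriv_add_le_of_uniformConvexOn {ψ : ℝ → ℝ} {f' : ℝ}
    (hf : UniformConvexOn s ψ f) (hx : x ∈ s) (hy : y ∈ s)
    (hf' : HasLineDerivWithinAt ℝ f f' s x (y - x)) :
    f x + f' + ψ ‖x - y‖ ≤ f y := by
  have segment_mem : Ioo (0 : ℝ) 1 ⊆ (fun t : ℝ ↦ x + t • (y - x)) ⁻¹' s :=
    fun t ht ↦ hf.1.add_smul_sub_mem hx hy (Ioo_subset_Icc_self ht)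
  have slope_tendsto :
      Tendsto (slope (fun t : ℝ ↦ f (x + t • (y - x))) 0) (𝓝[>] 0) (𝓝 f') := by
    rw [← nhdsWithin_Ioo_eq_nhdsGT one_pos]
    exact (hasDerivWithinAt_iff_tendsto_slope' (by simp)).1 (HasDerivWithinAt.mono hf' segment_mem)
  have bound_tendsto :
      Tendsto (fun t : ℝ ↦ f y - f x - (1 - t) * ψ ‖x - y‖) (𝓝[>] 0)
        (𝓝 (f y - f x - ψ ‖x - y‖)) :=
    tendsto_nhdsWithin_of_tendsto_nhds (Continuous.tendsto' (by fun_prop) _ _ (by simp))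
  have slope_le : ∀ᶠ t : ℝ in 𝓝[>] 0,
      slope (fun t : ℝ ↦ f (x + t • (y - x))) 0 t ≤ f y - f x - (1 - t) * ψ ‖x - y‖ := by
    filter_upwards [Ioo_mem_nhdsGT one_pos] with t ⟨ht0, ht1⟩
    have hconv := hf.2 hx hy (sub_nonneg.2 ht1.le) ht0.le (sub_add_cancel 1 t)
    rw [show (1 - t) • x + t • y = x + t • (y - x) by module] at hconv
    simp only [smul_eq_mul] at hconv
    rw [slope_def_field, sub_zero, zero_smul, add_zero, div_le_iff₀ ht0]
    linarith
  linarith [le_of_tendsto_of_tendsto slope_tendsto bound_tendsto slope_le]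

theorem mul_norm_sub_sq_le_fderiv_sub_of_strongConvexOn {m : ℝ} {f'x f'y : StrongDual ℝ E}
    (hf : StrongConvexOn s m f) (hx : x ∈ s) (hy : y ∈ s)
    (hf'x : HasFDerivWithinAt f f'x s x) (hf'y : HasFDerivWithinAt f f'y s y) :
    m * ‖x - y‖ ^ 2 ≤ (f'x - f'y) (x - y) := by
  have tangent_x := add_lineDeriv_add_le_of_uniformConvexOn hf hx hy (hf'x.hasLineDerivWithinAt _)
  have tangent_y := add_lineDeriv_add_le_of_uniformConvexOn hf hy hx (hf'y.hasLineDerivWithinAt _)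
  rw [norm_sub_rev y x] at tangent_y
  rw [← neg_sub x y, map_neg] at tangent_x
  rw [sub_apply]
  linarith

end UniformConvexity

/-- `ξ` is a subgradient at `x` of the extended-real-valued function `R`, that is `ξ ∈ ∂R(x)`.
Subgradients are taken in the dual space, so that no inner product is needed. -/
def HasSubgradientAt {E : Type*} [AddCommGroup E] [Module ℝ E] [TopologicalSpace E]
    (R : E → EReal) (ξ : StrongDual ℝ E) (x : E) : Prop :=
  ∀ u, R x + (ξ (u - x) : EReal) ≤ R u

namespace HasSubgradientAt

variable {E : Type*} [AddCommGroup E] [Module ℝ E] [TopologicalSpace E]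
  {R : E → EReal} {ξ η : StrongDual ℝ E} {x y : E}

theorem ne_top (hξ : HasSubgradientAt R ξ x) (hR : ∃ z, R z ≠ ⊤) : R x ≠ ⊤ := by
  obtain ⟨z, hz⟩ := hR
  intro hx
  have hxz := hξ z
  rw [hx, EReal.top_add_coe, top_le_iff] at hxz
  exact hz hxz

theorem sub_apply_sub_nonneg (hξ : HasSubgradientAt R ξ x) (hη : HasSubgradientAt R η y)
    (hx_top : R x ≠ ⊤) (hx_bot : R x ≠ ⊥) : 0 ≤ (ξ - η) (x - y) := by
  lift R x to ℝ using ⟨hx_top, hx_bot⟩ with r hr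
  have cycle_le : (r : EReal) + (ξ (y - x) + η (x - y) : ℝ) ≤ r :=
    calc (r : EReal) + (ξ (y - x) + η (x - y) : ℝ)
        = R x + ξ (y - x) + η (x - y) := by rw [← hr, EReal.coe_add, add_assoc]
      _ ≤ R y + η (x - y) := by gcongr; exact hξ y
      _ ≤ R x := hη x
      _ = r := hr.symm
  rw [← EReal.coe_add, EReal.coe_le_coe_iff, ← neg_sub x y, map_neg] at cycle_le
  rw [sub_apply]
  linarith

end HasSubgradientAt

theorem bregman_prox_nonexpansive_general {E : Type*} [NormedAddCommGroup E] [NormedSpace ℝ E]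
    {s : Set E} {φ : E → ℝ} {μ : ℝ} {R : E → EReal} {p₁ p₂ : E} {φ'₁ φ'₂ ξ₁ ξ₂ : StrongDual ℝ E}
    (hμ : 0 < μ) (hφ : StrongConvexOn s μ φ) (hp₁ : p₁ ∈ s) (hp₂ : p₂ ∈ s)
    (hφ'₁ : HasFDerivWithinAt φ φ'₁ s p₁) (hφ'₂ : HasFDerivWithinAt φ φ'₂ s p₂)
    (hR_ne_top : ∃ z, R z ≠ ⊤) (hR_ne_bot : R p₁ ≠ ⊥)
    (h₁ : HasSubgradientAt R (ξ₁ - φ'₁) p₁) (h₂ : HasSubgradientAt R (ξ₂ - φ'₂) p₂) :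
    ‖p₁ - p₂‖ ≤ (1 / μ) * ‖ξ₁ - ξ₂‖ := by
  have strongly_monotone : μ * ‖p₁ - p₂‖ ^ 2 ≤ (φ'₁ - φ'₂) (p₁ - p₂) :=
    mul_norm_sub_sq_le_fderiv_sub_of_strongConvexOn hφ hp₁ hp₂ hφ'₁ hφ'₂
  have monotone : 0 ≤ (ξ₁ - φ'₁ - (ξ₂ - φ'₂)) (p₁ - p₂) :=
    h₁.sub_apply_sub_nonneg h₂ (h₁.ne_top hR_ne_top) hR_ne_bot
  have mul_norm_le : μ * ‖p₁ - p₂‖ * ‖p₁ - p₂‖ ≤ ‖ξ₁ - ξ₂‖ * ‖p₁ - p₂‖ :=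
    calc μ * ‖p₁ - p₂‖ * ‖p₁ - p₂‖ = μ * ‖p₁ - p₂‖ ^ 2 := by ring
      _ ≤ (φ'₁ - φ'₂) (p₁ - p₂) := strongly_monotone
      _ ≤ (ξ₁ - ξ₂) (p₁ - p₂) := by
        rwa [sub_sub_sub_comm, sub_apply, sub_nonneg] at monotone
      _ ≤ ‖ξ₁ - ξ₂‖ * ‖p₁ - p₂‖ := (Real.le_norm_self _).trans ((ξ₁ - ξ₂).le_opNorm _)
  rw [one_div, ← div_eq_inv_mul, le_div_iff₀' hμ]
  obtain hp | hp := (norm_nonneg (p₁ - p₂)).eq_or_lt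
  · simp [← hp]
  · exact le_of_mul_le_mul_right mul_norm_le hp

/-- generalized nonexpansiveness of the Bregman proximal mapping. If `φ` is
differentiable and `μ`-strongly convex and `x_i − ∇φ(x_i⁺) ∈ ∂R(x_i⁺)` for `i = 1, 2`,
then `‖x₁⁺ − x₂⁺‖ ≤ (1/μ)‖x₁ − x₂‖`. -/
theorem bregman_prox_nonexpansive {d : ℕ}
    (φ : EuclideanSpace ℝ (Fin d) → ℝ)
    (φ' : EuclideanSpace ℝ (Fin d) → EuclideanSpace ℝ (Fin d))
    (μ : ℝ) (hμ : 0 < μ)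
    (hφ_diff : ∀ z, HasGradientAt φ (φ' z) z)
    (hφ_sconv : ConvexOn ℝ Set.univ (fun z => φ z - μ / 2 * ‖z‖ ^ 2))
    (R : EuclideanSpace ℝ (Fin d) → EReal)
    (hR_ne_top : ∃ z, R z ≠ ⊤) (hR_ne_bot : ∀ z, R z ≠ ⊥)
    (hR_conv : ∀ u v : EuclideanSpace ℝ (Fin d), ∀ t : ℝ, 0 ≤ t → t ≤ 1 →
      R (t • u + (1 - t) • v) ≤ (t : EReal) * R u + ((1 - t : ℝ) : EReal) * R v)
    (x₁ x₂ x₁p x₂p : EuclideanSpace ℝ (Fin d))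
    -- x₁ − ∇φ(x₁⁺) ∈ ∂R(x₁⁺)
    (h₁ : ∀ u, R x₁p + ((⟪x₁ - φ' x₁p, u - x₁p⟫ : ℝ) : EReal) ≤ R u)
    -- x₂ − ∇φ(x₂⁺) ∈ ∂R(x₂⁺)
    (h₂ : ∀ u, R x₂p + ((⟪x₂ - φ' x₂p, u - x₂p⟫ : ℝ) : EReal) ≤ R u) :
    ‖x₁p - x₂p‖ ≤ (1 / μ) * ‖x₁ - x₂‖ := by
  simpa [← map_sub] using bregman_prox_nonexpansive_general
    (ξ₁ := InnerProductSpace.toDual ℝ _ x₁) (ξ₂ := InnerProductSpace.toDual ℝ _ x₂) hμ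
    (strongConvexOn_iff_convex.2 hφ_sconv) (mem_univ x₁p) (mem_univ x₂p)
    (hφ_diff x₁p).hasFDerivAt.hasFDerivWithinAt (hφ_diff x₂p).hasFDerivAt.hasFDerivWithinAt
    hR_ne_top (hR_ne_bot x₁p) (by simpa [HasSubgradientAt, ← map_sub] using h₁)
    (by simpa [HasSubgradientAt, ← map_sub] using h₂)
end

section
/- Let φ : ℝ^d → ℝ be differentiable and μ-strongly convex (μ > 0) with ∇φ Lipschitz continuous with constant L_φ; let F : ℝ^d → ℝ be differentiable and L_F-smooth adaptable with respect to φ on ℝ^d; let R : ℝ^d → ℝ ∪ {+∞} be proper, lower semicontinuous and convex; let α > 0 and x ∈ ℝ^d. Let x⁺ be the unique point satisfying ∇φ(x) − α∇F(x) − ∇φ(x⁺) ∈ α∂R(x⁺), and set G_α(x) := (x − x⁺)/α. Then there exists v ∈ ∂R(x⁺) such that ‖∇F(x⁺) + v‖ ≤ (1 + αL_F)·L_φ·‖G_α(x)‖; that is, dist(0, ∇F(x⁺) + ∂R(x⁺)) ≤ (1 + αL_F)L_φ‖G_α(x)‖. -/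
open scoped RealInnerProductSpace

/-!
By the optimality condition, `v = (∇φ x - ∇φ x⁺) / α - ∇F x` is a subgradient of `R` at `x⁺`, and
`∇F x⁺ + v = (∇F x⁺ - ∇F x) + (∇φ x - ∇φ x⁺) / α`, so it suffices that `∇F` is Lipschitz with
constant `L_F L_φ`. Smooth adaptability says `|D_F| ≤ L_F D_φ`, and the descent lemma bounds `D_φ`
by `(L_φ / 2) ‖y - x‖²`. A two-sided quadratic bound on `D_F` in turn makes `∇F` Lipschitz with no
loss in the constant: `⟪∇F y - ∇F x, w⟫` is an alternating sum of four Bregman distances between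
`x`, `y` and the points `(x + y ± w) / 2`, whose squared lengths add up by the parallelogram law.
-/

section NormedSpace

variable {E : Type*} [NormedAddCommGroup E] [NormedSpace ℝ E]

/-- The Bregman distance `D_f(y, x)`: the error at `y` of the linearization of `f` at `x`. The
kernel `f` is arbitrary (so the value may be negative), and where `f` is not differentiable the
linear term is the junk value `0`. -/
noncomputable def bregmanDistance (f : E → ℝ) (y x : E) : ℝ :=
  f y - f x - fderiv ℝ f x (y - x)

/-- `F` is `L`-smooth adaptable with respect to the kernel `φ`, on the whole space. -/
structure IsSmoothAdaptable (L : ℝ) (φ F : E → ℝ) : Prop where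
  convexOn_add : ConvexOn ℝ Set.univ fun z => L * φ z + F z
  convexOn_sub : ConvexOn ℝ Set.univ fun z => L * φ z - F z

lemma bregmanDistance_nonneg {f : E → ℝ} {s : Set E} {x y : E} (hconv : ConvexOn ℝ s f)
    (hf : DifferentiableAt ℝ f x) (hx : x ∈ s) (hy : y ∈ s) : 0 ≤ bregmanDistance f y x := by
  let line : ℝ →ᵃ[ℝ] E := AffineMap.lineMap x y
  have hline : HasDerivAt (f ∘ line) (fderiv ℝ f x (y - x)) 0 :=
    HasFDerivAt.comp_hasDerivAt (0 : ℝ) (by simpa [line] using hf.hasFDerivAt)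
      AffineMap.hasDerivAt_lineMap
  have hslope := (hconv.comp_affineMap line).le_slope_of_hasDerivAt
    (by simpa [line] using hx) (by simpa [line] using hy) zero_lt_one hline
  have hslope_eq : slope (f ∘ line) 0 1 = f y - f x := by simp [line, slope_def_field]
  rw [hslope_eq] at hslope
  exact sub_nonneg.2 hslope

lemma bregmanDistance_le_of_norm_fderiv_sub_le {f : E → ℝ} {L : ℝ} {x y : E}
    (hf : ∀ z ∈ segment ℝ x y, DifferentiableAt ℝ f z)
    (hL : ∀ z ∈ segment ℝ x y, ‖fderiv ℝ f z - fderiv ℝ f x‖ ≤ L * ‖z - x‖) :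
    bregmanDistance f y x ≤ L / 2 * ‖y - x‖ ^ 2 := by
  let line : ℝ → E := AffineMap.lineMap x y
  have hmem {t : ℝ} (ht : t ∈ Set.Icc 0 1) : line t ∈ segment ℝ x y :=
    segment_eq_image_lineMap ℝ x y ▸ Set.mem_image_of_mem _ ht
  have hline_sub (t : ℝ) : line t - x = t • (y - x) := by simp [line, AffineMap.lineMap_apply]
  have hdist {t : ℝ} (ht : t ∈ Set.Icc 0 1) : HasDerivAt (fun t => bregmanDistance f (line t) x)
      ((fderiv ℝ f (line t) - fderiv ℝ f x) (y - x)) t :=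
    ((((hf _ (hmem ht)).hasFDerivAt.sub_const (f x)).sub
      ((fderiv ℝ f x).hasFDerivAt.comp _ ((hasFDerivAt_id _).sub_const x))).comp_hasDerivAt t
      AffineMap.hasDerivAt_lineMap)
  have hquad (t : ℝ) :
      HasDerivAt (fun t => L / 2 * ‖y - x‖ ^ 2 * t ^ 2) (L * ‖y - x‖ ^ 2 * t) t :=
    ((hasDerivAt_pow 2 t).const_mul _).congr_deriv (by norm_num; ring)
  have hderiv_le {t : ℝ} (ht : t ∈ Set.Icc 0 1) :
      (fderiv ℝ f (line t) - fderiv ℝ f x) (y - x) ≤ L * ‖y - x‖ ^ 2 * t :=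
    calc (fderiv ℝ f (line t) - fderiv ℝ f x) (y - x)
        ≤ ‖fderiv ℝ f (line t) - fderiv ℝ f x‖ * ‖y - x‖ :=
          (Real.le_norm_self _).trans (ContinuousLinearMap.le_opNorm _ _)
      _ ≤ L * ‖line t - x‖ * ‖y - x‖ := by gcongr; exact hL _ (hmem ht)
      _ = L * ‖y - x‖ ^ 2 * t := by
          rw [hline_sub, norm_smul, Real.norm_of_nonneg ht.1]; ring
  have hle := image_le_of_deriv_right_le_deriv_boundary
    (fun t ht => (hdist ht).continuousAt.continuousWithinAt)
    (fun t ht => (hdist (Set.Ico_subset_Icc_self ht)).hasDerivWithinAt)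
    (by simp [line, bregmanDistance])
    (fun t _ => (hquad t).continuousAt.continuousWithinAt)
    (fun t _ => (hquad t).hasDerivWithinAt)
    (fun t ht => hderiv_le (Set.Ico_subset_Icc_self ht)) (Set.right_mem_Icc.2 zero_le_one)
  simpa [line] using hle

lemma IsSmoothAdaptable.abs_bregmanDistance_le {φ F : E → ℝ} {L : ℝ} {x : E}
    (h : IsSmoothAdaptable L φ F) (hφ : DifferentiableAt ℝ φ x) (hF : DifferentiableAt ℝ F x)
    (y : E) : |bregmanDistance F y x| ≤ L * bregmanDistance φ y x := by
  have hLφ : DifferentiableAt ℝ (fun z => L * φ z) x := hφ.const_mul L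
  have hadd := bregmanDistance_nonneg h.convexOn_add (hLφ.fun_add hF) (Set.mem_univ x)
    (Set.mem_univ y)
  have hsub := bregmanDistance_nonneg h.convexOn_sub (hLφ.fun_sub hF) (Set.mem_univ x)
    (Set.mem_univ y)
  simp only [bregmanDistance, fderiv_fun_add hLφ hF, fderiv_fun_sub hLφ hF, fderiv_const_mul hφ,
    add_apply, sub_apply, smul_apply, smul_eq_mul] at hadd hsub
  rw [bregmanDistance, bregmanDistance, abs_le]
  constructor <;> linarith

end NormedSpace

section InnerProductSpace

variable {E : Type*} [NormedAddCommGroup E] [InnerProductSpace ℝ E]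

lemma fderiv_sub_apply_le_of_abs_bregmanDistance_le {f : E → ℝ} {L : ℝ}
    (hf : ∀ x y, |bregmanDistance f y x| ≤ L / 2 * ‖y - x‖ ^ 2) (x y w : E) :
    (fderiv ℝ f y - fderiv ℝ f x) w ≤ L / 2 * (‖w‖ ^ 2 + ‖y - x‖ ^ 2) := by
  set a : E := (2⁻¹ : ℝ) • (w + (y - x))
  set b : E := (2⁻¹ : ℝ) • (w - (y - x))
  have hab : a + b = w := by module
  have hab' : a - b = y - x := by module
  have hparallelogram : ‖w‖ ^ 2 + ‖y - x‖ ^ 2 = 2 * (‖a‖ ^ 2 + ‖b‖ ^ 2) := by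
    rw [← hab, ← hab', ← parallelogram_law_with_norm ℝ a b]
  have hxa : x + a - y = b := by module
  have hya : y - a - x = -b := by module
  have hfour : (fderiv ℝ f y - fderiv ℝ f x) w =
      bregmanDistance f (x + a) x - bregmanDistance f (x + a) y -
        bregmanDistance f (y - a) x + bregmanDistance f (y - a) y := by
    simp only [bregmanDistance, add_sub_cancel_left, sub_sub_cancel_left, hxa, hya, map_neg]
    rw [← hab, map_add, sub_apply, sub_apply]
    ring
  have hxx := (abs_le.1 (hf x (x + a))).2
  have hyx := (abs_le.1 (hf y (x + a))).1
  have hxy := (abs_le.1 (hf x (y - a))).1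
  have hyy := (abs_le.1 (hf y (y - a))).2
  rw [add_sub_cancel_left] at hxx
  rw [hxa] at hyx
  rw [hya, norm_neg] at hxy
  rw [sub_sub_cancel_left, norm_neg] at hyy
  rw [hfour, hparallelogram]
  linarith

lemma norm_fderiv_sub_le_of_abs_bregmanDistance_le {f : E → ℝ} {L : ℝ}
    (hf : ∀ x y, |bregmanDistance f y x| ≤ L / 2 * ‖y - x‖ ^ 2) (x y : E) :
    ‖fderiv ℝ f y - fderiv ℝ f x‖ ≤ L * ‖y - x‖ := by
  rcases eq_or_ne y x with rfl | hne
  · simp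
  have hpos : 0 < ‖y - x‖ := norm_pos_iff.2 (sub_ne_zero.2 hne)
  have hL : 0 ≤ L := by
    linarith [nonneg_of_mul_nonneg_left ((abs_nonneg _).trans (hf x y)) (pow_pos hpos 2)]
  -- Rescaling `u` to the length of `y - x` balances the two squares in the bound.
  have hunit {u : E} (hu : ‖u‖ = 1) : (fderiv ℝ f y - fderiv ℝ f x) u ≤ L * ‖y - x‖ := by
    have h := fderiv_sub_apply_le_of_abs_bregmanDistance_le hf x y (‖y - x‖ • u)
    rw [map_smul, smul_eq_mul, norm_smul, norm_norm, hu, mul_one] at h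
    exact le_of_mul_le_mul_left (h.trans_eq (by ring)) hpos
  refine ContinuousLinearMap.opNorm_le_of_unit_norm (by positivity) fun u hu =>
    abs_le.2 ⟨?_, hunit hu⟩
  rw [neg_le, ← map_neg]
  exact hunit ((norm_neg u).trans hu)

lemma IsSmoothAdaptable.norm_fderiv_sub_le {φ F : E → ℝ} {L K : ℝ} (h : IsSmoothAdaptable L φ F)
    (hL : 0 ≤ L) (hφ : Differentiable ℝ φ) (hF : Differentiable ℝ F)
    (hK : ∀ x y, ‖fderiv ℝ φ y - fderiv ℝ φ x‖ ≤ K * ‖y - x‖) (x y : E) :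
    ‖fderiv ℝ F y - fderiv ℝ F x‖ ≤ L * K * ‖y - x‖ := by
  refine norm_fderiv_sub_le_of_abs_bregmanDistance_le (fun x y => ?_) x y
  calc |bregmanDistance F y x|
      ≤ L * bregmanDistance φ y x := h.abs_bregmanDistance_le (hφ x) (hF x) y
    _ ≤ L * (K / 2 * ‖y - x‖ ^ 2) := by
        gcongr
        exact bregmanDistance_le_of_norm_fderiv_sub_le (fun z _ => hφ z) fun z _ => hK x z
    _ = L * K / 2 * ‖y - x‖ ^ 2 := by ring

/-- The convex subdifferential `∂R(x)` of an extended-real-valued function, with the dual space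
identified with `E` through the inner product. It is all of `E` where `R x = ⊥`. -/
def subdifferential (R : E → EReal) (x : E) : Set E :=
  {v | ∀ u, R x + ((⟪v, u - x⟫ : ℝ) : EReal) ≤ R u}

variable [CompleteSpace E]

lemma norm_fderiv_sub_eq_norm_sub_of_hasGradientAt {f g : E → ℝ} {f' g' x y : E}
    (hf : HasGradientAt f f' x) (hg : HasGradientAt g g' y) :
    ‖fderiv ℝ f x - fderiv ℝ g y‖ = ‖f' - g'‖ := by
  rw [hf.hasFDerivAt.fderiv, hg.hasFDerivAt.fderiv, ← map_sub, LinearIsometryEquiv.norm_map]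

lemma IsSmoothAdaptable.norm_gradient_sub_le {φ F : E → ℝ} {φ' F' : E → E} {L K : ℝ}
    (h : IsSmoothAdaptable L φ F) (hL : 0 ≤ L) (hφ : ∀ z, HasGradientAt φ (φ' z) z)
    (hF : ∀ z, HasGradientAt F (F' z) z) (hK : ∀ z w, ‖φ' z - φ' w‖ ≤ K * ‖z - w‖) (x y : E) :
    ‖F' y - F' x‖ ≤ L * K * ‖y - x‖ := by
  rw [← norm_fderiv_sub_eq_norm_sub_of_hasGradientAt (hF y) (hF x)]
  refine h.norm_fderiv_sub_le hL (fun z => (hφ z).differentiableAt)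
    (fun z => (hF z).differentiableAt) (fun z w => ?_) x y
  rw [norm_fderiv_sub_eq_norm_sub_of_hasGradientAt (hφ w) (hφ z)]
  exact hK w z

theorem bregman_mapping_subdifferential_bound_general {φ F : E → ℝ} {φ' F' : E → E} {Lφ LF : ℝ}
    (hφ : ∀ z, HasGradientAt φ (φ' z) z) (hLφ : ∀ z w, ‖φ' z - φ' w‖ ≤ Lφ * ‖z - w‖)
    (hF : ∀ z, HasGradientAt F (F' z) z) (hLF : 0 ≤ LF) (hsmad : IsSmoothAdaptable LF φ F)
    {R : E → EReal} {α : ℝ} (hα : 0 < α) {x xp : E}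
    (hxp : α⁻¹ • (φ' x - α • F' x - φ' xp) ∈ subdifferential R xp) :
    ∃ v ∈ subdifferential R xp, ‖F' xp + v‖ ≤ (1 + α * LF) * Lφ * ‖α⁻¹ • (x - xp)‖ := by
  refine ⟨_, hxp, ?_⟩
  have hsplit : F' xp + α⁻¹ • (φ' x - α • F' x - φ' xp) =
      (F' xp - F' x) + α⁻¹ • (φ' x - φ' xp) := by
    match_scalars <;> field_simp
  have hnorm_smul (z : E) : ‖α⁻¹ • z‖ = α⁻¹ * ‖z‖ := norm_smul_of_nonneg (by positivity) z
  calc ‖F' xp + α⁻¹ • (φ' x - α • F' x - φ' xp)‖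
      ≤ ‖F' xp - F' x‖ + α⁻¹ * ‖φ' x - φ' xp‖ := by
        rw [hsplit, ← hnorm_smul]
        exact norm_add_le _ _
    _ ≤ LF * Lφ * ‖x - xp‖ + α⁻¹ * (Lφ * ‖x - xp‖) := by
        rw [norm_sub_rev (F' xp)]
        gcongr
        · exact hsmad.norm_gradient_sub_le hLF hφ hF hLφ xp x
        · exact hLφ x xp
    _ = (1 + α * LF) * Lφ * ‖α⁻¹ • (x - xp)‖ := by
        rw [hnorm_smul]
        field_simp
        ring

end InnerProductSpace

/-- near-stationarity of the Bregman proximal gradient update. With `x⁺`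
defined by `∇φ(x) − α∇F(x) − ∇φ(x⁺) ∈ α∂R(x⁺)` and `G_α(x) = (x − x⁺)/α`, one has
`dist(0, ∇F(x⁺) + ∂R(x⁺)) ≤ (1 + αL_F)·L_φ·‖G_α(x)‖`. -/
theorem bregman_mapping_subdifferential_bound {d : ℕ}
    (φ F : EuclideanSpace ℝ (Fin d) → ℝ)
    (φ' F' : EuclideanSpace ℝ (Fin d) → EuclideanSpace ℝ (Fin d))
    (μ : ℝ) (hμ : 0 < μ)
    (hφ_diff : ∀ z, HasGradientAt φ (φ' z) z)
    (hφ_sconv : ConvexOn ℝ Set.univ (fun z => φ z - μ / 2 * ‖z‖ ^ 2))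
    (Lφ : ℝ) (hLφ : ∀ z w, ‖φ' z - φ' w‖ ≤ Lφ * ‖z - w‖)
    (hF_diff : ∀ z, HasGradientAt F (F' z) z)
    (LF : ℝ) (hLF : 0 < LF)
    -- F is L_F-smooth adaptable with respect to φ on ℝ^d
    (hsa₁ : ConvexOn ℝ Set.univ (fun z => LF * φ z + F z))
    (hsa₂ : ConvexOn ℝ Set.univ (fun z => LF * φ z - F z))
    (R : EuclideanSpace ℝ (Fin d) → EReal)
    (hR_ne_top : ∃ z, R z ≠ ⊤) (hR_ne_bot : ∀ z, R z ≠ ⊥)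
    (hR_lsc : LowerSemicontinuous R)
    (hR_conv : ∀ u v : EuclideanSpace ℝ (Fin d), ∀ t : ℝ, 0 ≤ t → t ≤ 1 →
      R (t • u + (1 - t) • v) ≤ (t : EReal) * R u + ((1 - t : ℝ) : EReal) * R v)
    (α : ℝ) (hα : 0 < α)
    (x xp : EuclideanSpace ℝ (Fin d))
    -- ∇φ(x) − α∇F(x) − ∇φ(x⁺) ∈ α ∂R(x⁺)
    (hxp : ∀ u, R xp +
        ((⟪α⁻¹ • (φ' x - α • F' x - φ' xp), u - xp⟫ : ℝ) : EReal) ≤ R u) :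
    ∃ v : EuclideanSpace ℝ (Fin d),
      (∀ u, R xp + ((⟪v, u - xp⟫ : ℝ) : EReal) ≤ R u) ∧
        ‖F' xp + v‖ ≤ (1 + α * LF) * Lφ * ‖α⁻¹ • (x - xp)‖ :=
  bregman_mapping_subdifferential_bound_general hφ_diff hLφ hF_diff hLF.le ⟨hsa₁, hsa₂⟩ hα hxp
end

section
/- Let φ : ℝ^d → ℝ be differentiable and μ-strongly convex with μ > 0, let R : ℝ^d → ℝ ∪ {+∞} be proper and convex, let α > 0 and x ∈ ℝ^d, and let g₁, g₂ ∈ ℝ^d. For i = 1, 2, let x_i⁺ satisfy ∇φ(x) − αg_i − ∇φ(x_i⁺) ∈ α∂R(x_i⁺), and set G_i := (x − x_i⁺)/α. Then ‖G₁ − G₂‖ ≤ (1/μ)‖g₁ − g₂‖. In particular, with g₁ = ∇F(x) the true gradient and g₂ = ∇̃ a stochastic estimator, the Bregman gradient mapping and the stochastic Bregman gradient mapping at x differ in norm by at most ‖∇F(x) − ∇̃‖/μ. -/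
open scoped RealInnerProductSpace

/-!
Subgradients of `R` are monotone and `∇φ` is `μ`-strongly monotone. Pairing the difference of the
two optimality conditions with `x₁⁺ - x₂⁺` therefore gives
`μ ‖x₁⁺ - x₂⁺‖² ≤ ⟪∇φ(x₁⁺) - ∇φ(x₂⁺), x₁⁺ - x₂⁺⟫ ≤ ⟪α (g₂ - g₁), x₁⁺ - x₂⁺⟫`,
and Cauchy–Schwarz concludes.
-/

theorem add_fderivWithin_sub_le_of_convexOn {E : Type*} [NormedAddCommGroup E] [NormedSpace ℝ E]
    {s : Set E} {f : E → ℝ} {f' : E →L[ℝ] ℝ} {a b : E} (hf : ConvexOn ℝ s f)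
    (hf' : HasFDerivWithinAt f f' s a) (ha : a ∈ s) (hb : b ∈ s) :
    f a + f' (b - a) ≤ f b := by
  let l : ℝ →ᵃ[ℝ] E := AffineMap.lineMap a b
  have hl₀ : l 0 = a := AffineMap.lineMap_apply_zero a b
  have hl₁ : l 1 = b := AffineMap.lineMap_apply_one a b
  have hderiv : HasDerivWithinAt (f ∘ l) (f' (b - a)) (l ⁻¹' s) 0 :=
    HasFDerivWithinAt.comp_hasDerivWithinAt 0 (hl₀.symm ▸ hf')
      AffineMap.hasDerivWithinAt_lineMap (Set.mapsTo_preimage l s)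
  have hslope : f' (b - a) ≤ slope (f ∘ l) 0 1 :=
    (hf.comp_affineMap l).le_slope_of_hasDerivWithinAt (by simpa [hl₀] using ha)
      (by simpa [hl₁] using hb) one_pos hderiv
  simp only [slope_def_field, Function.comp_apply, hl₀, hl₁, sub_zero, div_one] at hslope
  linarith

section InnerProductSpace

variable {E : Type*} [NormedAddCommGroup E] [InnerProductSpace ℝ E]

theorem mul_norm_le_norm_of_mul_norm_sq_le_inner {c : ℝ} {v w : E}
    (h : c * ‖w‖ ^ 2 ≤ ⟪v, w⟫) : c * ‖w‖ ≤ ‖v‖ := by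
  rcases (norm_nonneg w).eq_or_lt with hw | hw
  · simp [← hw]
  · refine le_of_mul_le_mul_right ?_ hw
    calc c * ‖w‖ * ‖w‖ = c * ‖w‖ ^ 2 := by ring
      _ ≤ ⟪v, w⟫ := h
      _ ≤ ‖v‖ * ‖w‖ := real_inner_le_norm v w

/-- `v` is a subgradient of the extended-real-valued function `f` at `a`, written `v ∈ ∂f(a)` in
convex analysis. The value `f a` may be infinite. -/
def IsSubgradientAt (f : E → EReal) (v a : E) : Prop :=
  ∀ u, f a + ((⟪v, u - a⟫ : ℝ) : EReal) ≤ f u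

namespace IsSubgradientAt

variable {f : E → EReal} {v w a b : E}

theorem ne_top (hv : IsSubgradientAt f v a) (hf : ∃ z, f z ≠ ⊤) : f a ≠ ⊤ := by
  obtain ⟨z, hz⟩ := hf
  intro ha
  exact hz (top_le_iff.mp (by simpa only [ha, EReal.top_add_coe] using hv z))

theorem inner_sub_nonneg (hv : IsSubgradientAt f v a) (hw : IsSubgradientAt f w b)
    (ha_top : f a ≠ ⊤) (ha_bot : f a ≠ ⊥) : 0 ≤ ⟪v - w, a - b⟫ := by
  have hb_top : f b ≠ ⊤ := hw.ne_top ⟨a, ha_top⟩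
  have hab := hv b
  have hba := hw a
  have hb_bot : f b ≠ ⊥ := by
    intro hb
    simp [hb, ha_bot] at hab
  lift f a to ℝ using ⟨ha_top, ha_bot⟩ with fa
  lift f b to ℝ using ⟨hb_top, hb_bot⟩ with fb
  norm_cast at hab hba
  simp only [inner_sub_left, inner_sub_right] at hab hba ⊢
  linarith

end IsSubgradientAt

variable [CompleteSpace E] {f : E → ℝ} {μ : ℝ} {p q a b : E}

theorem isSubgradientAt_of_convexOn (hf : ConvexOn ℝ Set.univ f) (hp : HasGradientAt f p a) :
    IsSubgradientAt (fun z => (f z : EReal)) p a := fun u => by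
  have h := add_fderivWithin_sub_le_of_convexOn hf hp.hasFDerivAt.hasFDerivWithinAt
    (Set.mem_univ a) (Set.mem_univ u)
  rw [InnerProductSpace.toDual_apply_apply] at h
  beta_reduce
  exact_mod_cast h

theorem hasGradientAt_sub_mul_norm_sq (hp : HasGradientAt f p a) (μ : ℝ) :
    HasGradientAt (fun z => f z - μ / 2 * ‖z‖ ^ 2) (p - μ • a) a := by
  have h := hp.hasFDerivAt.sub ((hasStrictFDerivAt_norm_sq a).hasFDerivAt.const_mul (μ / 2))
  rw [hasGradientAt_iff_hasFDerivAt]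
  refine h.congr_fderiv ?_
  ext v
  simp only [sub_apply, InnerProductSpace.toDual_apply_apply, smul_apply, coe_innerSL_apply,
    nsmul_eq_mul, Nat.cast_ofNat, smul_eq_mul, map_sub, map_smul, sub_right_inj]
  ring

theorem mul_norm_sub_sq_le_inner_gradient_sub (hf : StrongConvexOn Set.univ μ f)
    (hp : HasGradientAt f p a) (hq : HasGradientAt f q b) :
    μ * ‖a - b‖ ^ 2 ≤ ⟪p - q, a - b⟫ := by
  have hconv := strongConvexOn_iff_convex.mp hf
  have hmono : 0 ≤ ⟪(p - μ • a) - (q - μ • b), a - b⟫ :=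
    (isSubgradientAt_of_convexOn hconv (hasGradientAt_sub_mul_norm_sq hp μ)).inner_sub_nonneg
      (isSubgradientAt_of_convexOn hconv (hasGradientAt_sub_mul_norm_sq hq μ))
      (EReal.coe_ne_top _) (EReal.coe_ne_bot _)
  rwa [sub_sub_sub_comm, ← smul_sub, inner_sub_left, real_inner_smul_left,
    real_inner_self_eq_norm_sq, sub_nonneg] at hmono

theorem bregman_gradient_mapping_gap_general {φ : E → ℝ} {φ' : E → E} (hμ : 0 < μ)
    (hφ_diff : ∀ z, HasGradientAt φ (φ' z) z) (hφ_sconv : StrongConvexOn Set.univ μ φ)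
    {R : E → EReal} (hR_ne_top : ∃ z, R z ≠ ⊤) (hR_ne_bot : ∀ z, R z ≠ ⊥)
    {α : ℝ} (hα : 0 < α) {x g₁ g₂ x₁p x₂p : E}
    (h₁ : IsSubgradientAt R (α⁻¹ • (φ' x - α • g₁ - φ' x₁p)) x₁p)
    (h₂ : IsSubgradientAt R (α⁻¹ • (φ' x - α • g₂ - φ' x₂p)) x₂p) :
    ‖α⁻¹ • (x - x₁p) - α⁻¹ • (x - x₂p)‖ ≤ (1 / μ) * ‖g₁ - g₂‖ := by
  have hR : 0 ≤ α⁻¹ * ⟪α • (g₂ - g₁) - (φ' x₁p - φ' x₂p), x₁p - x₂p⟫ := by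
    convert h₁.inner_sub_nonneg h₂ (h₁.ne_top hR_ne_top) (hR_ne_bot x₁p) using 1
    rw [← real_inner_smul_left, ← smul_sub]
    congr 2
    module
  have hφ := mul_norm_sub_sq_le_inner_gradient_sub hφ_sconv (hφ_diff x₁p) (hφ_diff x₂p)
  have hinner : μ * ‖x₁p - x₂p‖ ^ 2 ≤ ⟪α • (g₂ - g₁), x₁p - x₂p⟫ := by
    have h := nonneg_of_mul_nonneg_right hR (inv_pos.mpr hα)
    rw [inner_sub_left, sub_nonneg] at h
    exact hφ.trans h
  have hdist : μ * ‖x₁p - x₂p‖ ≤ α * ‖g₁ - g₂‖ := by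
    simpa only [norm_smul, Real.norm_of_nonneg hα.le, norm_sub_rev g₂] using
      mul_norm_le_norm_of_mul_norm_sq_le_inner hinner
  calc ‖α⁻¹ • (x - x₁p) - α⁻¹ • (x - x₂p)‖ = α⁻¹ * ‖x₁p - x₂p‖ := by
        rw [← smul_sub, sub_sub_sub_cancel_left, norm_smul,
          Real.norm_of_nonneg (inv_pos.mpr hα).le, norm_sub_rev]
    _ ≤ (1 / μ) * ‖g₁ - g₂‖ := by
        rw [one_div, inv_mul_le_iff₀ hα, mul_left_comm, le_inv_mul_iff₀ hμ]
        exact hdist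

end InnerProductSpace

/-- the Bregman gradient mappings computed with two gradient inputs
`g₁, g₂` differ in norm by at most `(1/μ)‖g₁ − g₂‖`. In particular, the Bregman gradient
mapping and the stochastic Bregman gradient mapping at `x` differ by at most
`‖∇F(x) − ∇̃‖/μ`. -/
theorem bregman_gradient_mapping_gap {d : ℕ}
    (φ : EuclideanSpace ℝ (Fin d) → ℝ)
    (φ' : EuclideanSpace ℝ (Fin d) → EuclideanSpace ℝ (Fin d))
    (μ : ℝ) (hμ : 0 < μ)
    (hφ_diff : ∀ z, HasGradientAt φ (φ' z) z)
    (hφ_sconv : ConvexOn ℝ Set.univ (fun z => φ z - μ / 2 * ‖z‖ ^ 2))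
    (R : EuclideanSpace ℝ (Fin d) → EReal)
    (hR_ne_top : ∃ z, R z ≠ ⊤) (hR_ne_bot : ∀ z, R z ≠ ⊥)
    (hR_conv : ∀ u v : EuclideanSpace ℝ (Fin d), ∀ t : ℝ, 0 ≤ t → t ≤ 1 →
      R (t • u + (1 - t) • v) ≤ (t : EReal) * R u + ((1 - t : ℝ) : EReal) * R v)
    (α : ℝ) (hα : 0 < α)
    (x g₁ g₂ x₁p x₂p : EuclideanSpace ℝ (Fin d))
    -- ∇φ(x) − αg₁ − ∇φ(x₁⁺) ∈ α ∂R(x₁⁺)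
    (h₁ : ∀ u, R x₁p +
        ((⟪α⁻¹ • (φ' x - α • g₁ - φ' x₁p), u - x₁p⟫ : ℝ) : EReal) ≤ R u)
    -- ∇φ(x) − αg₂ − ∇φ(x₂⁺) ∈ α ∂R(x₂⁺)
    (h₂ : ∀ u, R x₂p +
        ((⟪α⁻¹ • (φ' x - α • g₂ - φ' x₂p), u - x₂p⟫ : ℝ) : EReal) ≤ R u) :
    ‖α⁻¹ • (x - x₁p) - α⁻¹ • (x - x₂p)‖ ≤ (1 / μ) * ‖g₁ - g₂‖ := by
  exact bregman_gradient_mapping_gap_general hμ hφ_diff (strongConvexOn_iff_convex.mpr hφ_sconv)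
    hR_ne_top hR_ne_bot hα h₁ h₂
end

section
/- Let d ≥ 1, p ∈ ℝ^d, α > 0, λ > 0, δ > 0, and let r ≥ 2 be an integer. Define the kernel φ(W) := (1/2)‖W‖² + (δ/r)‖W‖^r on ℝ^d, and define p⁺ ∈ ℝ^d componentwise by p⁺_j := sign(p_j)·max(|p_j| − αλ, 0). Then: (i) p⁺ is the unique minimizer of p̂ ↦ (1/2)‖p̂ − p‖² + αλ‖p̂‖₁; (ii) the equation δ‖p⁺‖^{r−2}·t^{r−1} + t − 1 = 0 has a unique positive real root t*; and (iii) the unique minimizer of W ↦ φ(W) + ⟨p, W⟩ + αλ‖W‖₁ over ℝ^d is W* = −t*·p⁺. -/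
open scoped RealInnerProductSpace

/-- The ℓ1 norm on `ℝ^d`. -/
noncomputable def l1Norm {d : ℕ} (q : EuclideanSpace ℝ (Fin d)) : ℝ := ∑ j, |q j|

/-- The soft-thresholding objective `p̂ ↦ (1/2)‖p̂ − p‖² + αλ‖p̂‖₁`. -/
noncomputable def softObj {d : ℕ} (p : EuclideanSpace ℝ (Fin d)) (α lam : ℝ)
    (q : EuclideanSpace ℝ (Fin d)) : ℝ :=
  (1 / 2) * ‖q - p‖ ^ 2 + α * lam * l1Norm q

/-- The SBPG subproblem objective `W ↦ φ(W) + ⟨p, W⟩ + αλ‖W‖₁`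
with kernel `φ(W) = (1/2)‖W‖² + (δ/r)‖W‖^r`. -/
noncomputable def subObj {d : ℕ} (p : EuclideanSpace ℝ (Fin d)) (α lam δ : ℝ) (r : ℕ)
    (W : EuclideanSpace ℝ (Fin d)) : ℝ :=
  (1 / 2) * ‖W‖ ^ 2 + (δ / r) * ‖W‖ ^ r + ⟪p, W⟫ + α * lam * l1Norm W

/-!
Both objectives are minimized where a strongly convex function has `0` as a subgradient.
Soft-thresholding is the proximal point of `g = κ‖·‖₁`, i.e. `p - p⁺ ∈ ∂g(p⁺)`, and the absolute
homogeneity of `g` turns this into `-(p - p⁺) ∈ ∂g(-t • p⁺)` for every `t > 0`. The kernel has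
gradient `(1 + δ‖W‖ ^ (r - 2)) • W`, which at `W = -t • p⁺` equals `-p⁺` when `t` solves the
scalar equation, so that the subgradients `-p⁺`, `p` and `-(p - p⁺)` of the three terms add up
to zero.
-/

/-- `s` is a subgradient of `f` at `x` with strong convexity modulus `m`; for `m = 0` this is the
membership `s ∈ ∂f(x)` of convex analysis. -/
def IsStrongSubgradient {E : Type*} [NormedAddCommGroup E] [InnerProductSpace ℝ E]
    (m : ℝ) (f : E → ℝ) (s x : E) : Prop :=
  ∀ y, f x + ⟪s, y - x⟫ + m / 2 * ‖y - x‖ ^ 2 ≤ f y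

namespace IsStrongSubgradient

variable {E : Type*} [NormedAddCommGroup E] [InnerProductSpace ℝ E]
  {f g : E → ℝ} {m n c : ℝ} {s u x : E}

theorem add (hf : IsStrongSubgradient m f s x) (hg : IsStrongSubgradient n g u x) :
    IsStrongSubgradient (m + n) (fun y => f y + g y) (s + u) x := fun y => by
  rw [inner_add_left]
  linarith [hf y, hg y]

theorem const_mul (hc : 0 ≤ c) (hf : IsStrongSubgradient m f s x) :
    IsStrongSubgradient (c * m) (fun y => c * f y) (c • s) x := fun y => by
  rw [real_inner_smul_left]
  linarith [mul_le_mul_of_nonneg_left (hf y) hc]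

theorem inner_right (s x : E) : IsStrongSubgradient 0 (fun y => ⟪s, y⟫) s x := fun y => by
  simp [inner_sub_right]

theorem half_norm_sub_sq (a x : E) :
    IsStrongSubgradient 1 (fun y => 1 / 2 * ‖y - a‖ ^ 2) (x - a) x := fun y => by
  have hexpand : ‖y - a‖ ^ 2 = ‖x - a‖ ^ 2 + 2 * ⟪x - a, y - x⟫ + ‖y - x‖ ^ 2 := by
    rw [← norm_add_sq_real, sub_add_sub_cancel']
  linarith

theorem norm_pow {r : ℕ} (hr : 2 ≤ r) (x : E) :
    IsStrongSubgradient 0 (fun y => ‖y‖ ^ r) ((r * ‖x‖ ^ (r - 2)) • x) x := fun y => by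
  have htangent := pow_add_mul_le_add_pow (norm_nonneg x)
    (by linarith [norm_nonneg x, norm_nonneg y] : 0 ≤ 2 * ‖x‖ + (‖y‖ - ‖x‖)) r
  have hinner : ⟪x, y - x⟫ ≤ ‖x‖ * (‖y‖ - ‖x‖) := by
    rw [inner_sub_right, real_inner_self_eq_norm_sq]
    linarith [real_inner_le_norm x y]
  calc ‖x‖ ^ r + ⟪(r * ‖x‖ ^ (r - 2)) • x, y - x⟫ + 0 / 2 * ‖y - x‖ ^ 2
      = ‖x‖ ^ r + r * ‖x‖ ^ (r - 2) * ⟪x, y - x⟫ := by rw [real_inner_smul_left]; ring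
    _ ≤ ‖x‖ ^ r + r * ‖x‖ ^ (r - 2) * (‖x‖ * (‖y‖ - ‖x‖)) := by gcongr
    _ = ‖x‖ ^ r + r * ‖x‖ ^ (r - 1) * (‖y‖ - ‖x‖) := by
      rw [show r - 1 = r - 2 + 1 by omega]; ring
    _ ≤ ‖y‖ ^ r := by simpa using htangent

theorem smul_of_abs_homogeneous (hg : ∀ (a : ℝ) y, g (a • y) = |a| * g y) (hc : c ≠ 0)
    (h : IsStrongSubgradient 0 g s x) :
    IsStrongSubgradient 0 g (Real.sign c • s) (c • x) := fun y => by
  have habs : |c| = Real.sign c * c := by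
    rcases hc.lt_or_gt with hneg | hpos
    · rw [abs_of_neg hneg, Real.sign_of_neg hneg, neg_one_mul]
    · rw [abs_of_pos hpos, Real.sign_of_pos hpos, one_mul]
  calc g (c • x) + ⟪Real.sign c • s, y - c • x⟫ + 0 / 2 * ‖y - c • x‖ ^ 2
      = g (c • x) + ⟪Real.sign c • s, c • (c⁻¹ • y - x)⟫ := by
        rw [smul_sub, smul_inv_smul₀ hc]; ring
    _ = |c| * (g x + ⟪s, c⁻¹ • y - x⟫) := by
        rw [hg, real_inner_smul_left, real_inner_smul_right, habs]; ring
    _ ≤ |c| * g (c⁻¹ • y) :=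
        mul_le_mul_of_nonneg_left (by linarith [h (c⁻¹ • y)]) (abs_nonneg c)
    _ = g y := by rw [← hg, smul_inv_smul₀ hc]

theorem sum_apply {ι : Type*} [Fintype ι] {F : ι → Type*} [∀ i, NormedAddCommGroup (F i)]
    [∀ i, InnerProductSpace ℝ (F i)] {f : ∀ i, F i → ℝ} {s x : PiLp 2 F}
    (h : ∀ i, IsStrongSubgradient m (f i) (s i) (x i)) :
    IsStrongSubgradient m (fun y : PiLp 2 F => ∑ i, f i (y i)) s x := fun y => by
  rw [PiLp.inner_apply, PiLp.norm_sq_eq_of_L2, Finset.mul_sum, ← Finset.sum_add_distrib,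
    ← Finset.sum_add_distrib]
  exact Finset.sum_le_sum fun i _ => h i (y i)

theorem unique_minimizer (h : IsStrongSubgradient m f 0 x) (hm : 0 < m) :
    (∀ y, f x ≤ f y) ∧ ∀ y, (∀ z, f y ≤ f z) → y = x := by
  have hgrowth : ∀ y, f x + m / 2 * ‖y - x‖ ^ 2 ≤ f y := by
    simpa [IsStrongSubgradient] using h
  refine ⟨fun y => (le_add_of_nonneg_right (by positivity)).trans (hgrowth y), fun y hy => ?_⟩
  by_contra hne
  have hnorm : 0 < ‖y - x‖ := norm_sub_pos_iff.mpr hne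
  have hgap : 0 < m / 2 * ‖y - x‖ ^ 2 := by positivity
  linarith [hgrowth y, hy x]

end IsStrongSubgradient

section HomogeneousRegularizer

variable {E : Type*} [NormedAddCommGroup E] [InnerProductSpace ℝ E] {g : E → ℝ} {p q : E}

theorem isStrongSubgradient_zero_proximal (hq : IsStrongSubgradient 0 g (p - q) q) :
    IsStrongSubgradient 1 (fun y => 1 / 2 * ‖y - p‖ ^ 2 + g y) 0 q := by
  simpa using (IsStrongSubgradient.half_norm_sub_sq p q).add hq

/-- The kernel `φ(W) = (1/2)‖W‖² + (δ/r)‖W‖^r` generating the Bregman distance. -/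
noncomputable def polynomialKernel (δ : ℝ) (r : ℕ) (W : E) : ℝ :=
  1 / 2 * ‖W‖ ^ 2 + δ / r * ‖W‖ ^ r

theorem isStrongSubgradient_polynomialKernel {δ : ℝ} (hδ : 0 ≤ δ) {r : ℕ} (hr : 2 ≤ r) (V : E) :
    IsStrongSubgradient 1 (polynomialKernel δ r) ((1 + δ * ‖V‖ ^ (r - 2)) • V) V := by
  have hr₀ : (r : ℝ) ≠ 0 := by positivity
  have hsum := (IsStrongSubgradient.half_norm_sub_sq 0 V).add
    ((IsStrongSubgradient.norm_pow hr V).const_mul (div_nonneg hδ r.cast_nonneg))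
  have hgradient : V - 0 + (δ / r) • ((r * ‖V‖ ^ (r - 2)) • V)
      = (1 + δ * ‖V‖ ^ (r - 2)) • V := by
    rw [sub_zero, smul_smul, ← mul_assoc, div_mul_cancel₀ δ hr₀, add_smul, one_smul]
  rw [hgradient] at hsum
  simpa only [polynomialKernel, IsStrongSubgradient, sub_zero, mul_zero, add_zero] using hsum

theorem polynomialKernel_gradient_eq_neg {δ t : ℝ} {r : ℕ} (hr : 2 ≤ r) (ht : 0 ≤ t)
    (hroot : δ * ‖q‖ ^ (r - 2) * t ^ (r - 1) + t - 1 = 0) :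
    (1 + δ * ‖-t • q‖ ^ (r - 2)) • (-t • q) = -q := by
  have hcoeff : (1 + δ * ‖-t • q‖ ^ (r - 2)) * -t = -1 := by
    rw [norm_smul, norm_neg, Real.norm_of_nonneg ht, mul_pow]
    rw [show r - 1 = r - 2 + 1 by omega] at hroot
    linear_combination -hroot
  rw [smul_smul, hcoeff, neg_one_smul]

theorem isStrongSubgradient_zero_bregman_subproblem (hg : ∀ (a : ℝ) y, g (a • y) = |a| * g y)
    (hq : IsStrongSubgradient 0 g (p - q) q) {δ t : ℝ} {r : ℕ} (hδ : 0 ≤ δ) (hr : 2 ≤ r)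
    (ht : 0 < t) (hroot : δ * ‖q‖ ^ (r - 2) * t ^ (r - 1) + t - 1 = 0) :
    IsStrongSubgradient 1 (fun W => polynomialKernel δ r W + ⟪p, W⟫ + g W) 0 (-t • q) := by
  have hkernel := isStrongSubgradient_polynomialKernel hδ hr (-t • q)
  rw [polynomialKernel_gradient_eq_neg hr ht.le hroot] at hkernel
  have hreg := hq.smul_of_abs_homogeneous hg (neg_ne_zero.mpr ht.ne')
  rw [Real.sign_of_neg (neg_neg_of_pos ht), neg_one_smul] at hreg
  have hsum := (hkernel.add (IsStrongSubgradient.inner_right p _)).add hreg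
  rwa [show -q + p + -(p - q) = 0 by abel, add_zero, add_zero] at hsum

end HomogeneousRegularizer

/-- The scalar soft-thresholding map with threshold `κ`, which is the proximal map of `κ|·|`. -/
noncomputable def softThreshold (κ a : ℝ) : ℝ := Real.sign a * max (|a| - κ) 0

theorem softThreshold_of_abs_le {κ a : ℝ} (h : |a| ≤ κ) : softThreshold κ a = 0 := by
  rw [softThreshold, max_eq_right (sub_nonpos.mpr h), mul_zero]

theorem softThreshold_of_lt {κ a : ℝ} (hκ : 0 ≤ κ) (h : κ < a) :
    softThreshold κ a = a - κ := by
  have ha : 0 < a := hκ.trans_lt h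
  rw [softThreshold, Real.sign_of_pos ha, abs_of_pos ha, max_eq_left (sub_nonneg.mpr h.le), one_mul]

theorem softThreshold_neg (κ a : ℝ) : softThreshold κ (-a) = -softThreshold κ a := by
  rw [softThreshold, Real.sign_neg, abs_neg, neg_mul, softThreshold]

theorem isStrongSubgradient_softThreshold {κ : ℝ} (hκ : 0 ≤ κ) (a : ℝ) :
    IsStrongSubgradient 0 (fun y => κ * |y|) (a - softThreshold κ a) (softThreshold κ a) :=
  fun y => by
  simp only [RCLike.inner_apply, conj_trivial, zero_div, zero_mul, add_zero]
  rcases le_or_gt |a| κ with hsmall | hlarge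
  · rw [softThreshold_of_abs_le hsmall, abs_zero, mul_zero, zero_add, sub_zero, sub_zero]
    calc y * a ≤ |y| * |a| := (le_abs_self _).trans_eq (abs_mul y a)
      _ ≤ κ * |y| := by rw [mul_comm]; gcongr
  rcases lt_abs.mp hlarge with hpos | hneg
  · rw [softThreshold_of_lt hκ hpos, abs_of_pos (sub_pos.mpr hpos)]
    linarith [mul_le_mul_of_nonneg_left (le_abs_self y) hκ]
  · have hvalue : softThreshold κ a = a + κ := by
      rw [← neg_neg a, softThreshold_neg, softThreshold_of_lt hκ hneg]; ring
    rw [hvalue, abs_of_neg (by linarith)]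
    linarith [mul_le_mul_of_nonneg_left (neg_le_abs y) hκ]

theorem l1Norm_smul {d : ℕ} (c : ℝ) (q : EuclideanSpace ℝ (Fin d)) :
    l1Norm (c • q) = |c| * l1Norm q := by
  simp [l1Norm, Finset.mul_sum, abs_mul]

theorem isStrongSubgradient_l1Norm_softThreshold {d : ℕ} {κ : ℝ} (hκ : 0 ≤ κ)
    {p q : EuclideanSpace ℝ (Fin d)} (hq : ∀ j, q j = softThreshold κ (p j)) :
    IsStrongSubgradient 0 (fun y => κ * l1Norm y) (p - q) q := by
  simp only [l1Norm, Finset.mul_sum]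
  refine IsStrongSubgradient.sum_apply (f := fun _ y => κ * |y|) fun j => ?_
  rw [PiLp.sub_apply, hq j]
  exact isStrongSubgradient_softThreshold hκ (p j)

theorem existsUnique_pos_mul_pow_add_sub_one_eq_zero {c : ℝ} (hc : 0 ≤ c) {n : ℕ}
    (hn : n ≠ 0) :
    ∃! t : ℝ, 0 < t ∧ c * t ^ n + t - 1 = 0 := by
  have hmono : StrictMonoOn (fun t : ℝ => c * t ^ n + t - 1) (Set.Ici 0) := fun s hs u _ hsu => by
    have hpow := mul_le_mul_of_nonneg_left (pow_le_pow_left₀ hs hsu.le n) hc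
    dsimp only
    linarith
  have hcont : ContinuousOn (fun t : ℝ => c * t ^ n + t - 1) (Set.Icc 0 1) := by fun_prop
  obtain ⟨t, ht, hroot⟩ := intermediate_value_Icc zero_le_one hcont
    (show (0 : ℝ) ∈ Set.Icc _ _ by simp [hn, hc])
  have hne : t ≠ 0 := by
    rintro rfl
    simp [hn] at hroot
  exact ⟨t, ⟨ht.1.lt_of_ne' hne, hroot⟩, fun s hs =>
    hmono.injOn hs.1.le ht.1 (hs.2.trans hroot.symm)⟩

/-- closed-form solution of the SBPG subproblem with polynomial kernel and
ℓ1 regularization: (i) `p⁺` (soft-thresholding of `p`) is the unique minimizer of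
`p̂ ↦ (1/2)‖p̂ − p‖² + αλ‖p̂‖₁`; (ii) `δ‖p⁺‖^{r−2}t^{r−1} + t − 1 = 0` has a unique
positive root `t*`; (iii) `W* = −t*·p⁺` is the unique minimizer of
`W ↦ φ(W) + ⟨p, W⟩ + αλ‖W‖₁`. -/
theorem sbpg_subproblem_closed_form {d : ℕ} (hd : 1 ≤ d)
    (p : EuclideanSpace ℝ (Fin d))
    (α lam δ : ℝ) (hα : 0 < α) (hlam : 0 < lam) (hδ : 0 < δ)
    (r : ℕ) (hr : 2 ≤ r)
    (pplus : EuclideanSpace ℝ (Fin d))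
    (hpplus : ∀ j, pplus j = Real.sign (p j) * max (|p j| - α * lam) 0) :
    ((∀ q, softObj p α lam pplus ≤ softObj p α lam q) ∧
        (∀ q, (∀ q', softObj p α lam q ≤ softObj p α lam q') → q = pplus)) ∧
      (∃! t : ℝ, 0 < t ∧ δ * ‖pplus‖ ^ (r - 2) * t ^ (r - 1) + t - 1 = 0) ∧
      (∀ t : ℝ, 0 < t → δ * ‖pplus‖ ^ (r - 2) * t ^ (r - 1) + t - 1 = 0 →
        (∀ W, subObj p α lam δ r (-t • pplus) ≤ subObj p α lam δ r W) ∧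
          (∀ W, (∀ W', subObj p α lam δ r W ≤ subObj p α lam δ r W') →
            W = -t • pplus)) := by
  have hκ : 0 ≤ α * lam := by positivity
  have hprox : IsStrongSubgradient 0 (fun q => α * lam * l1Norm q) (p - pplus) pplus :=
    isStrongSubgradient_l1Norm_softThreshold hκ hpplus
  have hhom (a : ℝ) (q : EuclideanSpace ℝ (Fin d)) :
      α * lam * l1Norm (a • q) = |a| * (α * lam * l1Norm q) := by
    rw [l1Norm_smul]; ring
  exact ⟨(isStrongSubgradient_zero_proximal hprox).unique_minimizer one_pos,
    existsUnique_pos_mul_pow_add_sub_one_eq_zero (by positivity) (by omega), fun t ht hroot =>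
    (isStrongSubgradient_zero_bregman_subproblem hhom hprox hδ.le hr ht hroot).unique_minimizer
      one_pos⟩
end

section
/- Let δ > 0, let r ≥ 2 be an integer, let α > 0, and let W, v ∈ ℝ^d. Set p := αv − (1 + δ‖W‖^{r−2})·W, and suppose t > 0 satisfies δ‖p‖^{r−2}·t^{r−1} + t − 1 = 0, with W⁺ := −t·p. Then t·(1 + δ‖W⁺‖^{r−2}) = 1, and consequently the update admits the implicit representation W⁺ = [(1 + δ‖W‖^{r−2})/(1 + δ‖W⁺‖^{r−2})]·W − [α/(1 + δ‖W⁺‖^{r−2})]·v. -/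
theorem neg_smul_sub_eq_div_smul_sub_div_smul {K M : Type*} [Field K] [AddCommGroup M]
    [Module K M] {t c : K} (h : t * c = 1) (a b : K) (v w : M) :
    -t • (a • v - b • w) = (b / c) • w - (a / c) • v := by
  rw [eq_inv_of_mul_eq_one_left h, div_eq_mul_inv, div_eq_mul_inv]
  module

section

variable {E : Type*} [SeminormedAddCommGroup E] [NormedSpace ℝ E]

theorem mul_one_add_mul_norm_neg_smul_pow_eq_one_iff {t : ℝ} (ht : 0 ≤ t) (δ : ℝ) (n : ℕ)
    (p : E) :
    t * (1 + δ * ‖-t • p‖ ^ n) = 1 ↔ δ * ‖p‖ ^ n * t ^ (n + 1) + t - 1 = 0 := by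
  have expand : t * (1 + δ * ‖-t • p‖ ^ n) = δ * ‖p‖ ^ n * t ^ (n + 1) + t := by
    rw [neg_smul, norm_neg, norm_smul_of_nonneg ht]
    ring
  rw [expand, sub_eq_zero]

theorem bpg_implicit_update_general (δ α : ℝ) (r : ℕ) (hr : 2 ≤ r) (W v p Wplus : E)
    (t : ℝ) (ht : 0 ≤ t)
    (hp : p = α • v - (1 + δ * ‖W‖ ^ (r - 2)) • W)
    (heq : δ * ‖p‖ ^ (r - 2) * t ^ (r - 1) + t - 1 = 0)
    (hWplus : Wplus = -t • p) :
    t * (1 + δ * ‖Wplus‖ ^ (r - 2)) = 1 ∧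
      Wplus = ((1 + δ * ‖W‖ ^ (r - 2)) / (1 + δ * ‖Wplus‖ ^ (r - 2))) • W
        - (α / (1 + δ * ‖Wplus‖ ^ (r - 2))) • v := by
  have hexp : r - 1 = r - 2 + 1 := by omega
  have hscale : t * (1 + δ * ‖Wplus‖ ^ (r - 2)) = 1 := by
    rw [hWplus, mul_one_add_mul_norm_neg_smul_pow_eq_one_iff ht, ← hexp]
    exact heq
  refine ⟨hscale, ?_⟩
  calc
    Wplus = -t • (α • v - (1 + δ * ‖W‖ ^ (r - 2)) • W) := by rw [hWplus, hp]
    _ = _ := neg_smul_sub_eq_div_smul_sub_div_smul hscale ..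

end

/-- implicit representation of one Bregman proximal gradient step with the
kernel `φ(W) = (1/2)‖W‖² + (δ/r)‖W‖^r` (no ℓ1 regularization). If
`p = αv − (1 + δ‖W‖^{r−2})W`, `t > 0` solves `δ‖p‖^{r−2}t^{r−1} + t − 1 = 0` and
`W⁺ = −t·p`, then `t(1 + δ‖W⁺‖^{r−2}) = 1` and
`W⁺ = [(1 + δ‖W‖^{r−2})/(1 + δ‖W⁺‖^{r−2})]W − [α/(1 + δ‖W⁺‖^{r−2})]v`. -/
theorem bpg_implicit_update {d : ℕ}
    (δ α : ℝ) (hδ : 0 < δ) (hα : 0 < α)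
    (r : ℕ) (hr : 2 ≤ r)
    (W v p Wplus : EuclideanSpace ℝ (Fin d))
    (t : ℝ) (ht : 0 < t)
    (hp : p = α • v - (1 + δ * ‖W‖ ^ (r - 2)) • W)
    (heq : δ * ‖p‖ ^ (r - 2) * t ^ (r - 1) + t - 1 = 0)
    (hWplus : Wplus = -t • p) :
    t * (1 + δ * ‖Wplus‖ ^ (r - 2)) = 1 ∧
      Wplus = ((1 + δ * ‖W‖ ^ (r - 2)) / (1 + δ * ‖Wplus‖ ^ (r - 2))) • W
        - (α / (1 + δ * ‖Wplus‖ ^ (r - 2))) • v :=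
  bpg_implicit_update_general δ α r hr W v p Wplus t ht.le hp heq hWplus
end

section
/- Let δ > 0 and let r ≥ 4 be a real number, and define φ : ℝ^d → ℝ by φ(w) := (1/2)‖w‖² + (δ/r)‖w‖^r. Then φ is twice continuously differentiable on ℝ^d, and for all w, h ∈ ℝ^d the second derivative satisfies D²φ(w)[h, h] ≥ (1 + δ‖w‖^{r−2})·‖h‖². In particular, ∇φ(w) = (1 + δ‖w‖^{r−2})w and, for w ≠ 0, D²φ(w)[h, h] = (1 + δ‖w‖^{r−2})‖h‖² + δ(r − 2)‖w‖^{r−4}⟨w, h⟩². -/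
open scoped RealInnerProductSpace

/-- The polynomial kernel `φ(w) = (1/2)‖w‖² + (δ/r)‖w‖^r` (real exponent `r`). -/
noncomputable def polyKernel {d : ℕ} (δ r : ℝ) (w : EuclideanSpace ℝ (Fin d)) : ℝ :=
  (1 / 2) * ‖w‖ ^ 2 + (δ / r) * ‖w‖ ^ r

/-!
Away from the origin everything is the chain rule. The gradient of the kernel is
`w + δ • ‖w‖ ^ (r - 2) • w`, and the point is that `G w = ‖w‖ ^ s • w` is `C¹` up to the origin for
every `s ≥ 0`, although `‖w‖ ^ s` itself need not be. At the origin only continuity of `‖w‖ ^ s` is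
needed for `G` to be differentiable, and the singular part `s ‖w‖ ^ (s - 2) w ⊗ w` of its
derivative has norm `s ‖w‖ ^ s`. That part is positive semidefinite, whence the Hessian bound.
-/

theorem hasFDerivAt_smul_self_zero {𝕜 V : Type*} [NontriviallyNormedField 𝕜]
    [NormedAddCommGroup V] [NormedSpace 𝕜 V] {c : V → 𝕜} (hc : ContinuousAt c 0) :
    HasFDerivAt (fun x => c x • x) (c 0 • ContinuousLinearMap.id 𝕜 V) 0 := by
  have hc_sub : (fun x => c x - c 0) =o[nhds 0] fun _ => (1 : 𝕜) :=
    (Asymptotics.isLittleO_one_iff 𝕜).2 (tendsto_sub_nhds_zero_iff.2 hc)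
  refine .of_isLittleO ?_
  simpa [sub_smul] using hc_sub.smul_isBigO (Asymptotics.isBigO_refl (fun x : V => x) (nhds 0))

section NormRpow

open InnerProductSpace (rankOne)

variable {E : Type*} [NormedAddCommGroup E] [InnerProductSpace ℝ E]

theorem hasFDerivAt_norm_rpow_of_ne {x : E} (hx : x ≠ 0) (p : ℝ) :
    HasFDerivAt (fun y : E => ‖y‖ ^ p) ((p * ‖x‖ ^ (p - 2)) • innerSL ℝ x) x := by
  have hsq : HasFDerivAt (fun y : E => (‖y‖ ^ 2) ^ (p / 2))
      ((p / 2 * (‖x‖ ^ 2) ^ (p / 2 - 1)) • 2 • innerSL ℝ x) x :=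
    (hasStrictFDerivAt_norm_sq x).hasFDerivAt.rpow_const (by simp [hx])
  convert! hsq using 1
  · ext y
    rw [← Real.rpow_natCast_mul (norm_nonneg y)]
    ring_nf
  · rw [← Real.rpow_natCast_mul (norm_nonneg x), ← Nat.cast_smul_eq_nsmul ℝ, smul_smul]
    ring_nf

-- At `x = 0` with `s < 2` the factor `‖x‖ ^ (s - 2)` is a junk value, but it multiplies `0`.
theorem hasFDerivAt_norm_rpow_smul_self {x : E} {s : ℝ} (h : x ≠ 0 ∨ 0 ≤ s) :
    HasFDerivAt (fun y : E => ‖y‖ ^ s • y)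
      (‖x‖ ^ s • ContinuousLinearMap.id ℝ E + (s * ‖x‖ ^ (s - 2)) • rankOne ℝ x x) x := by
  rcases eq_or_ne x 0 with rfl | hx
  · have hcont : ContinuousAt (fun y : E => ‖y‖ ^ s) 0 :=
      continuous_norm.continuousAt.rpow_const (.inr (h.resolve_left (· rfl)))
    simpa using hasFDerivAt_smul_self_zero hcont
  · refine ((hasFDerivAt_norm_rpow_of_ne hx s).fun_smul (hasFDerivAt_id x)).congr_fderiv ?_
    ext y
    simp [smul_smul]

theorem continuous_norm_rpow_smul_rankOne_self {q : ℝ} (hq : -2 < q) :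
    Continuous fun x : E => ‖x‖ ^ q • rankOne ℝ x x := by
  have hq2 : 0 < q + 2 := by linarith
  have hnorm (x : E) : ‖‖x‖ ^ q • rankOne ℝ x x‖ = ‖x‖ ^ (q + 2) := by
    rw [norm_smul, InnerProductSpace.norm_rankOne, Real.norm_of_nonneg (by positivity), ← sq,
      ← Real.rpow_add_natCast' (norm_nonneg x) (by exact_mod_cast hq2.ne')]
    norm_num
  refine continuous_iff_continuousAt.2 fun x => ?_
  rcases eq_or_ne x 0 with rfl | hx
  · have hlim : ContinuousAt (fun y : E => ‖y‖ ^ (q + 2)) 0 :=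
      continuous_norm.continuousAt.rpow_const (.inr hq2.le)
    rw [ContinuousAt, map_zero, smul_zero, tendsto_zero_iff_norm_tendsto_zero]
    simpa [hnorm, ContinuousAt, hq2.ne'] using hlim
  · have hrankOne : Continuous fun y : E => rankOne ℝ y y :=
      (rankOne ℝ).continuous.clm_apply continuous_id
    exact (continuous_norm.continuousAt.rpow_const (.inl (norm_ne_zero_iff.2 hx))).smul
      hrankOne.continuousAt

theorem contDiff_one_norm_rpow_smul_self {s : ℝ} (hs : 0 ≤ s) :
    ContDiff ℝ 1 fun x : E => ‖x‖ ^ s • x := by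
  rcases hs.eq_or_lt with rfl | hs_pos
  · simpa using contDiff_fun_id
  refine contDiff_one_iff_hasFDerivAt.2
    ⟨_, ?_, fun x => hasFDerivAt_norm_rpow_smul_self (.inr hs)⟩
  simp only [mul_smul]
  exact ((continuous_norm.rpow_const fun _ => .inr hs).smul continuous_const).add
    ((continuous_norm_rpow_smul_rankOne_self (by linarith)).const_smul s)

/-- The polynomial kernel `φ(w) = (1/2)‖w‖² + (δ/r)‖w‖^r` on a real inner product space of any
dimension; on Euclidean space it is definitionally `polyKernel`. -/
noncomputable def normPolyKernel (δ r : ℝ) (w : E) : ℝ :=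
  (1 / 2) * ‖w‖ ^ 2 + (δ / r) * ‖w‖ ^ r

variable {δ r : ℝ}

theorem hasFDerivAt_normPolyKernel (hr : 1 < r) (w : E) :
    HasFDerivAt (normPolyKernel δ r) (innerSL ℝ ((1 + δ * ‖w‖ ^ (r - 2)) • w)) w := by
  have hsq := (hasStrictFDerivAt_norm_sq w).hasFDerivAt.const_mul (1 / 2 : ℝ)
  have hpow := (hasFDerivAt_norm_rpow w hr).const_mul (δ / r)
  refine (hsq.add hpow).congr_fderiv ?_
  have hr0 : r ≠ 0 := by linarith
  ext h
  simp only [add_apply, smul_apply, smul_eq_mul, nsmul_eq_mul, map_smul, innerSL_apply_apply]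
  field_simp
  push_cast
  ring

theorem fderiv_normPolyKernel (hr : 1 < r) :
    fderiv ℝ (normPolyKernel δ r) =
      fun w : E => innerSL ℝ (w + δ • ‖w‖ ^ (r - 2) • w) := by
  ext1 w
  rw [(hasFDerivAt_normPolyKernel hr w).fderiv, add_smul, one_smul, mul_smul]

theorem contDiff_two_normPolyKernel (hr : 2 ≤ r) :
    ContDiff ℝ 2 (normPolyKernel δ r : E → ℝ) := by
  have hr1 : 1 < r := by linarith
  refine (contDiff_succ_iff_fderiv (n := 1)).2
    ⟨fun w => (hasFDerivAt_normPolyKernel hr1 w).differentiableAt, by simp, ?_⟩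
  rw [fderiv_normPolyKernel hr1]
  exact (innerSL ℝ).contDiff.comp
    (contDiff_id.add ((contDiff_one_norm_rpow_smul_self (sub_nonneg.2 hr)).const_smul δ))

theorem iteratedFDeriv_two_normPolyKernel (hr : 2 ≤ r) (w h k : E) :
    iteratedFDeriv ℝ 2 (normPolyKernel δ r) w ![h, k] =
      (1 + δ * ‖w‖ ^ (r - 2)) * ⟪h, k⟫
        + δ * (r - 2) * ‖w‖ ^ (r - 4) * (⟪w, h⟫ * ⟪w, k⟫) := by
  have hgrad : HasFDerivAt (fun y : E => y + δ • ‖y‖ ^ (r - 2) • y)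
      (.id ℝ E + δ • (‖w‖ ^ (r - 2) • .id ℝ E + ((r - 2) * ‖w‖ ^ (r - 4)) • rankOne ℝ w w)) w := by
    have hpow := hasFDerivAt_norm_rpow_smul_self (x := w) (.inr (sub_nonneg.2 hr))
    rw [show r - 2 - 2 = r - 4 by ring] at hpow
    exact (hasFDerivAt_id w).fun_add (hpow.fun_const_smul δ)
  have hfderiv : HasFDerivAt (fun y : E => innerSL ℝ (y + δ • ‖y‖ ^ (r - 2) • y)) _ w :=
    (innerSL ℝ).hasFDerivAt.comp w hgrad
  rw [iteratedFDeriv_two_apply, fderiv_normPolyKernel (by linarith), hfderiv.fderiv]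
  change ⟪h + δ • (‖w‖ ^ (r - 2) • h + ((r - 2) * ‖w‖ ^ (r - 4)) • ⟪w, h⟫ • w), k⟫ = _
  simp only [inner_add_left, real_inner_smul_left]
  ring

theorem polyKernel_hessian_lower_bound_general (hδ : 0 ≤ δ) (hr : 2 ≤ r) :
    ContDiff ℝ 2 (normPolyKernel δ r : E → ℝ) ∧
      (∀ w h : E, (1 + δ * ‖w‖ ^ (r - 2)) * ‖h‖ ^ 2 ≤
        iteratedFDeriv ℝ 2 (normPolyKernel δ r) w ![h, h]) ∧
      (∀ w : E, HasFDerivAt (normPolyKernel δ r) (innerSL ℝ ((1 + δ * ‖w‖ ^ (r - 2)) • w)) w) ∧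
      (∀ w h : E, w ≠ 0 → iteratedFDeriv ℝ 2 (normPolyKernel δ r) w ![h, h] =
        (1 + δ * ‖w‖ ^ (r - 2)) * ‖h‖ ^ 2
          + δ * (r - 2) * ‖w‖ ^ (r - 4) * ⟪w, h⟫ ^ 2) := by
  have hhess (w h : E) : iteratedFDeriv ℝ 2 (normPolyKernel δ r) w ![h, h] =
      (1 + δ * ‖w‖ ^ (r - 2)) * ‖h‖ ^ 2
        + δ * (r - 2) * ‖w‖ ^ (r - 4) * ⟪w, h⟫ ^ 2 := by
    rw [iteratedFDeriv_two_normPolyKernel hr, real_inner_self_eq_norm_sq, ← sq]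
  refine ⟨contDiff_two_normPolyKernel hr, fun w h => ?_,
    hasFDerivAt_normPolyKernel (by linarith), fun w h _ => hhess w h⟩
  have hcoeff : 0 ≤ δ * (r - 2) := mul_nonneg hδ (sub_nonneg.2 hr)
  rw [hhess, mul_assoc (δ * (r - 2))]
  exact le_add_of_nonneg_right (mul_nonneg hcoeff (by positivity))

end NormRpow

/-- for `δ > 0` and `r ≥ 4`, the kernel `φ(w) = (1/2)‖w‖² + (δ/r)‖w‖^r` is
`C²`, its second derivative satisfies `D²φ(w)[h,h] ≥ (1 + δ‖w‖^{r−2})‖h‖²`, its gradient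
is `∇φ(w) = (1 + δ‖w‖^{r−2})w`, and for `w ≠ 0`,
`D²φ(w)[h,h] = (1 + δ‖w‖^{r−2})‖h‖² + δ(r−2)‖w‖^{r−4}⟨w,h⟩²`. -/
theorem polyKernel_hessian_lower_bound {d : ℕ}
    (δ : ℝ) (hδ : 0 < δ) (r : ℝ) (hr : 4 ≤ r) :
    ContDiff ℝ 2 (polyKernel (d := d) δ r) ∧
      (∀ w h : EuclideanSpace ℝ (Fin d),
        (1 + δ * ‖w‖ ^ (r - 2)) * ‖h‖ ^ 2 ≤
          iteratedFDeriv ℝ 2 (polyKernel (d := d) δ r) w ![h, h]) ∧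
      (∀ w : EuclideanSpace ℝ (Fin d),
        gradient (polyKernel (d := d) δ r) w = (1 + δ * ‖w‖ ^ (r - 2)) • w) ∧
      (∀ w h : EuclideanSpace ℝ (Fin d), w ≠ 0 →
        iteratedFDeriv ℝ 2 (polyKernel (d := d) δ r) w ![h, h] =
          (1 + δ * ‖w‖ ^ (r - 2)) * ‖h‖ ^ 2
            + δ * (r - 2) * ‖w‖ ^ (r - 4) * ⟪w, h⟫ ^ 2) := by
  have ⟨hC2, hbound, hderiv, hhess⟩ := polyKernel_hessian_lower_bound_general
    (E := EuclideanSpace ℝ (Fin d)) hδ.le (by linarith : 2 ≤ r)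
  exact ⟨hC2, hbound, fun w => HasGradientAt.gradient (hderiv w), hhess⟩
end

section
/- For ε > 0 define the smoothed ReLU function σ_ε : ℝ → ℝ by σ_ε(x) = 0 for x ≤ 0, σ_ε(x) = x³(1/ε² − x/(2ε³)) for 0 < x ≤ ε, and σ_ε(x) = x − ε/2 for x > ε. Then σ_ε is twice continuously differentiable on ℝ, and for every ε ∈ (0, 1/2) and every x ∈ ℝ, 0 ≤ σ_ε(x)·σ_ε″(x) ≤ 3/4; that is, 3/4 is a uniform bound on the product σ_ε·σ_ε″ for all ε ∈ (0, 1/2). -/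
/-- The smoothed ReLU activation function `σ_ε`. -/
noncomputable def smoothReLU (ε : ℝ) (x : ℝ) : ℝ :=
  if x ≤ 0 then 0
  else if x ≤ ε then x ^ 3 * (1 / ε ^ 2 - x / (2 * ε ^ 3))
  else x - ε / 2

/-!
Two `C^n` functions whose derivatives of order at most `n` agree at a point glue to a `C^n` function
there. The three pieces of `σ_ε` match to second order at `0` and at `ε`. On the middle piece, with
`t = x / ε ∈ [0, 1]`, the powers of `ε` in `σ_ε` and `σ_ε″` cancel, and
`σ_ε σ_ε″ = 3 t² · t (1 - t) · t (2 - t)`, where the last three factors are at most `1`, `1/4`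
and `1`. On the outer pieces `σ_ε″ = 0`.
-/

open Set

section Gluing

variable {F : Type*} [NormedAddCommGroup F] [NormedSpace ℝ F] {f g f' g' : ℝ → F} {a : ℝ}

theorem hasDerivAt_ite_le (hf : ∀ x ≤ a, HasDerivAt f (f' x) x)
    (hg : ∀ x, a ≤ x → HasDerivAt g (g' x) x) (h : f a = g a) (h' : f' a = g' a) (x : ℝ) :
    HasDerivAt (fun y => if y ≤ a then f y else g y) (if x ≤ a then f' x else g' x) x := by
  have eqOn_Ici : EqOn (fun y => if y ≤ a then f y else g y) g (Ici a) := by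
    intro y (hy : a ≤ y)
    rcases hy.eq_or_lt with rfl | hy
    · simpa only [le_refl, if_true] using h
    · exact if_neg hy.not_ge
  rcases lt_trichotomy x a with hx | rfl | hx
  · rw [if_pos hx.le]
    refine (hf x hx.le).congr_of_eventuallyEq ?_
    filter_upwards [Iio_mem_nhds hx] with y hy using if_pos (le_of_lt hy)
  · rw [if_pos le_rfl, ← hasDerivWithinAt_univ, ← Iic_union_Ici (a := x)]
    refine .union ?_ ?_
    · exact (hf x le_rfl).hasDerivWithinAt.congr (fun y hy => if_pos hy) (if_pos le_rfl)
    · rw [h']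
      exact (hg x le_rfl).hasDerivWithinAt.congr eqOn_Ici (eqOn_Ici self_mem_Ici)
  · rw [if_neg hx.not_ge]
    exact (hg x hx.le).congr_of_eventuallyEq (eqOn_Ici.eventuallyEq_of_mem (Ici_mem_nhds hx))

theorem differentiable_ite_le (hf : Differentiable ℝ f) (hg : Differentiable ℝ g)
    (h : f a = g a) (h' : deriv f a = deriv g a) :
    Differentiable ℝ (fun x => if x ≤ a then f x else g x) := fun x =>
  (hasDerivAt_ite_le (fun y _ => (hf y).hasDerivAt) (fun y _ => (hg y).hasDerivAt)
    h h' x).differentiableAt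

theorem deriv_ite_le (hf : Differentiable ℝ f) (hg : Differentiable ℝ g)
    (h : f a = g a) (h' : deriv f a = deriv g a) :
    deriv (fun x => if x ≤ a then f x else g x) =
      fun x => if x ≤ a then deriv f x else deriv g x :=
  funext fun x => (hasDerivAt_ite_le (fun y _ => (hf y).hasDerivAt) (fun y _ => (hg y).hasDerivAt)
    h h' x).deriv

theorem iteratedDeriv_ite_le {n : ℕ} (hf : ContDiff ℝ n f) (hg : ContDiff ℝ n g)
    (h : ∀ k ≤ n, iteratedDeriv k f a = iteratedDeriv k g a) :
    iteratedDeriv n (fun x => if x ≤ a then f x else g x) =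
      fun x => if x ≤ a then iteratedDeriv n f x else iteratedDeriv n g x := by
  induction n generalizing f g with
  | zero => simp only [iteratedDeriv_zero]
  | succ n ih =>
    rw [Nat.cast_succ, contDiff_succ_iff_deriv] at hf hg
    have h₀ : f a = g a := by simpa only [iteratedDeriv_zero] using h 0 n.succ.zero_le
    have h_deriv (k : ℕ) (hk : k ≤ n) :
        iteratedDeriv k (deriv f) a = iteratedDeriv k (deriv g) a := by
      simpa only [iteratedDeriv_succ'] using h (k + 1) (Nat.succ_le_succ hk)
    have h₁ : deriv f a = deriv g a := by simpa only [iteratedDeriv_zero] using h_deriv 0 n.zero_le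
    simp only [iteratedDeriv_succ', deriv_ite_le hf.1 hg.1 h₀ h₁, ih hf.2.2 hg.2.2 h_deriv]

theorem contDiff_ite_le {n : ℕ} (hf : ContDiff ℝ n f) (hg : ContDiff ℝ n g)
    (h : ∀ k ≤ n, iteratedDeriv k f a = iteratedDeriv k g a) :
    ContDiff ℝ n (fun x => if x ≤ a then f x else g x) := by
  rw [contDiff_nat_iff_iteratedDeriv]
  have eq_of_le {m : ℕ} (hm : m ≤ n) := iteratedDeriv_ite_le (hf.of_le (mod_cast hm))
    (hg.of_le (mod_cast hm)) fun k hk => h k (hk.trans hm)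
  refine ⟨fun m hm => ?_, fun m hm => ?_⟩
  · rw [eq_of_le hm]
    refine (hf.continuous_iteratedDeriv m (mod_cast hm)).if_le
      (hg.continuous_iteratedDeriv m (mod_cast hm)) continuous_id continuous_const ?_
    rintro x rfl
    exact h m hm
  · rw [eq_of_le hm.le]
    refine differentiable_ite_le (hf.differentiable_iteratedDeriv m (mod_cast hm))
      (hg.differentiable_iteratedDeriv m (mod_cast hm)) (h m hm.le) ?_
    simpa only [iteratedDeriv_succ] using h (m + 1) hm

end Gluing

theorem iteratedDeriv_two_sub_const (c : ℝ) :
    iteratedDeriv 2 (fun x : ℝ => x - c) = fun _ => 0 := by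
  simp only [iteratedDeriv_succ, iteratedDeriv_zero, deriv_sub_const_fun, deriv_id'', deriv_const']

/-- The quartic polynomial that defines `σ_ε` on the transition interval `(0, ε]`, as a function
on all of `ℝ`. -/
noncomputable def smoothReLUQuartic (ε x : ℝ) : ℝ :=
  x ^ 3 * (1 / ε ^ 2 - x / (2 * ε ^ 3))

section Quartic

variable (ε : ℝ)

theorem contDiff_smoothReLUQuartic {n : WithTop ℕ∞} : ContDiff ℝ n (smoothReLUQuartic ε) := by
  unfold smoothReLUQuartic
  fun_prop

theorem deriv_smoothReLUQuartic :
    deriv (smoothReLUQuartic ε) = fun x => 3 * x ^ 2 / ε ^ 2 - 2 * x ^ 3 / ε ^ 3 := by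
  funext x
  refine HasDerivAt.deriv <| ((hasDerivAt_pow 3 x).fun_mul
    (((hasDerivAt_id' x).div_const (2 * ε ^ 3)).const_sub (1 / ε ^ 2))).congr_deriv ?_
  push_cast
  ring

theorem iteratedDeriv_two_smoothReLUQuartic :
    iteratedDeriv 2 (smoothReLUQuartic ε) = fun x => 6 * x / ε ^ 2 - 6 * x ^ 2 / ε ^ 3 := by
  rw [iteratedDeriv_succ, iteratedDeriv_one, deriv_smoothReLUQuartic]
  funext x
  refine HasDerivAt.deriv <| ((((hasDerivAt_pow 2 x).const_mul 3).div_const (ε ^ 2)).fun_sub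
    (((hasDerivAt_pow 3 x).const_mul 2).div_const (ε ^ 3))).congr_deriv ?_
  push_cast
  ring

theorem iteratedDeriv_smoothReLUQuartic_zero {k : ℕ} (hk : k ≤ 2) :
    iteratedDeriv k (smoothReLUQuartic ε) 0 = 0 := by
  interval_cases k
  · simp [smoothReLUQuartic]
  · simp [deriv_smoothReLUQuartic]
  · simp [iteratedDeriv_two_smoothReLUQuartic]

theorem smoothReLUQuartic_mul_iteratedDeriv_two (x : ℝ) :
    smoothReLUQuartic ε x * iteratedDeriv 2 (smoothReLUQuartic ε) x =
      3 * ((x / ε) ^ 2 * (x / ε * (1 - x / ε)) * (x / ε * (2 - x / ε))) := by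
  simp only [smoothReLUQuartic, iteratedDeriv_two_smoothReLUQuartic]
  ring

variable {ε}

theorem iteratedDeriv_smoothReLUQuartic_self (hε : ε ≠ 0) {k : ℕ} (hk : k ≤ 2) :
    iteratedDeriv k (smoothReLUQuartic ε) ε = iteratedDeriv k (fun x => x - ε / 2) ε := by
  interval_cases k
  · simp only [iteratedDeriv_zero, smoothReLUQuartic]
    field_simp
  · simp only [iteratedDeriv_one, deriv_smoothReLUQuartic, deriv_sub_const_fun, deriv_id'']
    field_simp
    ring
  · simp only [iteratedDeriv_two_smoothReLUQuartic, iteratedDeriv_two_sub_const]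
    field_simp
    ring

theorem smoothReLUQuartic_mul_iteratedDeriv_two_mem_Icc {x : ℝ} (hx : x ∈ Icc 0 ε) :
    smoothReLUQuartic ε x * iteratedDeriv 2 (smoothReLUQuartic ε) x ∈ Icc 0 (3 / 4) := by
  rw [smoothReLUQuartic_mul_iteratedDeriv_two]
  have hε : 0 ≤ ε := hx.1.trans hx.2
  have ht₀ : 0 ≤ x / ε := div_nonneg hx.1 hε
  have ht₁ : x / ε ≤ 1 := div_le_one_of_le₀ hx.2 hε
  generalize x / ε = t at ht₀ ht₁
  have h₁ : 0 ≤ t * (1 - t) := mul_nonneg ht₀ (by linarith)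
  have h₂ : 0 ≤ t * (2 - t) := mul_nonneg ht₀ (by linarith)
  refine ⟨mul_nonneg zero_le_three (mul_nonneg (mul_nonneg (sq_nonneg t) h₁) h₂), ?_⟩
  calc 3 * (t ^ 2 * (t * (1 - t)) * (t * (2 - t))) ≤ 3 * (1 * (1 / 4) * 1) := by
        gcongr
        · exact pow_le_one₀ ht₀ ht₁
        · linarith [sq_nonneg (t - 1 / 2)]
        · linarith [sq_nonneg (t - 1)]
    _ = 3 / 4 := by norm_num

end Quartic

section SmoothReLU

variable {ε : ℝ}

/-- The part of `σ_ε` on `(0, ∞)`, extended to `ℝ` by the quartic. -/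
noncomputable def smoothReLUPos (ε x : ℝ) : ℝ :=
  if x ≤ ε then smoothReLUQuartic ε x else x - ε / 2

theorem contDiff_two_smoothReLUPos (hε : ε ≠ 0) : ContDiff ℝ 2 (smoothReLUPos ε) :=
  contDiff_ite_le (n := 2) (contDiff_smoothReLUQuartic ε) (by fun_prop)
    fun _ => iteratedDeriv_smoothReLUQuartic_self hε

theorem iteratedDeriv_smoothReLUPos (hε : ε ≠ 0) {k : ℕ} (hk : k ≤ 2) :
    iteratedDeriv k (smoothReLUPos ε) = fun x =>
      if x ≤ ε then iteratedDeriv k (smoothReLUQuartic ε) x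
      else iteratedDeriv k (fun y => y - ε / 2) x :=
  iteratedDeriv_ite_le (contDiff_smoothReLUQuartic ε) (by fun_prop)
    fun _ hj => iteratedDeriv_smoothReLUQuartic_self hε (hj.trans hk)

theorem iteratedDeriv_smoothReLUPos_zero (hε : 0 < ε) {k : ℕ} (hk : k ≤ 2) :
    iteratedDeriv k (smoothReLUPos ε) 0 = iteratedDeriv k (fun _ : ℝ => (0 : ℝ)) 0 := by
  simp only [iteratedDeriv_smoothReLUPos hε.ne' hk, if_pos hε.le,
    iteratedDeriv_smoothReLUQuartic_zero ε hk, iteratedDeriv_const, ite_self]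

theorem contDiff_two_smoothReLU (hε : 0 < ε) : ContDiff ℝ 2 (smoothReLU ε) :=
  contDiff_ite_le (n := 2) contDiff_const (contDiff_two_smoothReLUPos hε.ne')
    fun _ hk => (iteratedDeriv_smoothReLUPos_zero hε hk).symm

theorem iteratedDeriv_two_smoothReLU (hε : 0 < ε) :
    iteratedDeriv 2 (smoothReLU ε) = fun x =>
      if x ≤ 0 then 0 else if x ≤ ε then iteratedDeriv 2 (smoothReLUQuartic ε) x else 0 := by
  refine (iteratedDeriv_ite_le (n := 2) contDiff_const (contDiff_two_smoothReLUPos hε.ne')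
    fun _ hk => (iteratedDeriv_smoothReLUPos_zero hε hk).symm).trans ?_
  simp only [iteratedDeriv_smoothReLUPos hε.ne' le_rfl, iteratedDeriv_two_sub_const,
    iteratedDeriv_const, two_ne_zero, if_false]

theorem smoothReLU_mul_iteratedDeriv_two_mem_Icc (hε : 0 < ε) (x : ℝ) :
    smoothReLU ε x * iteratedDeriv 2 (smoothReLU ε) x ∈ Icc 0 (3 / 4) := by
  rw [iteratedDeriv_two_smoothReLU hε]
  rcases le_or_gt x 0 with hx | hx
  · norm_num [hx]
  rcases le_or_gt x ε with hxε | hxε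
  · simp only [smoothReLU, if_neg hx.not_ge, if_pos hxε]
    exact smoothReLUQuartic_mul_iteratedDeriv_two_mem_Icc ⟨hx.le, hxε⟩
  · norm_num [hx.not_ge, hxε.not_ge]

end SmoothReLU

theorem smoothReLU_C2_and_product_bound_general (ε : ℝ) (hε : 0 < ε) :
    ContDiff ℝ 2 (smoothReLU ε) ∧
      ∀ x : ℝ, 0 ≤ smoothReLU ε x * iteratedDeriv 2 (smoothReLU ε) x ∧
        smoothReLU ε x * iteratedDeriv 2 (smoothReLU ε) x ≤ 3 / 4 :=
  ⟨contDiff_two_smoothReLU hε, smoothReLU_mul_iteratedDeriv_two_mem_Icc hε⟩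

/-- for every `ε > 0` the smoothed ReLU `σ_ε` is twice continuously
differentiable, and for every `ε ∈ (0, 1/2)` and every `x ∈ ℝ`,
`0 ≤ σ_ε(x)·σ_ε″(x) ≤ 3/4`. -/
theorem smoothReLU_C2_and_product_bound :
    ∀ ε : ℝ, 0 < ε →
      ContDiff ℝ 2 (smoothReLU ε) ∧
      (ε < 1 / 2 → ∀ x : ℝ,
        0 ≤ smoothReLU ε x * iteratedDeriv 2 (smoothReLU ε) x ∧
          smoothReLU ε x * iteratedDeriv 2 (smoothReLU ε) x ≤ 3 / 4) := by
  intro ε hε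
  obtain ⟨h_contDiff, h_bound⟩ := smoothReLU_C2_and_product_bound_general ε hε
  exact ⟨h_contDiff, fun _ => h_bound⟩
end
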